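/- arXiv:2510.26324 — 3 statements merged into one kernel-verified Lean document; each statement's English description precedes it below -/
import Mathlib

section
/- Let α > 0 and let X be a random vector in ℝ^d with Lebesgue density π(x) proportional to exp(−V(x)), where V : ℝ^d → ℝ is twice continuously differentiable with ∇²V(x) ⪰ α I_d for all x. Let μ = E[X]. Then for every δ ∈ (0,1), P[ ‖X − μ‖ ≤ √(d/α) + √(2 ln(1/δ)/α) ] ≥ 1 − δ. -/
open MeasureTheory

open Set Filter ProbabilityTheory
open scoped ENNReal NNReal Pointwise Topology

/-!
Let `ν` have density proportional to `exp (-V)` with `V` strongly convex of modulus `α`, and let `f`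
be `K`-Lipschitz. The Prékopa–Leindler inequality, applied to `exp f` and `1` with weights `t` and
`1 - t`, gives `t * log E[exp f] ≤ log E[exp (t * f)] + t * (1 - t) * K ^ 2 / (2 * α)`: the modulus
of convexity of `V` absorbs the oscillation of `f`. Dividing by `t` and letting `t → 0⁺` yields
`log E[exp f] ≤ E[f] + K ^ 2 / (2 * α)`, so `f - E[f]` is sub-Gaussian with parameter `K ^ 2 / α`.
In particular every coordinate has variance at most `1 / α`, whence `E‖X - μ‖ ≤ √(d / α)`, and the
Chernoff bound for the `1`-Lipschitz function `‖· - μ‖` concludes.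
-/

lemma volume_add_le_volume_add_of_isCompact {A B : Set ℝ} (hA : IsCompact A) (hB : IsCompact B)
    (hA₀ : A.Nonempty) (hB₀ : B.Nonempty) : volume A + volume B ≤ volume (A + B) := by
  obtain ⟨a, ha, hamax⟩ := hA.exists_isGreatest hA₀
  obtain ⟨b, hb, hbmin⟩ := hB.exists_isLeast hB₀
  -- With `a = max A` and `b = min B`, these translates of `A` and `B` meet only at `a + b`.
  have hdisj : AEDisjoint volume (A + {b}) ({a} + B) := by
    refine measure_mono_null (t := {a + b}) ?_ (by simp)
    rintro _ ⟨⟨x, hx, _, rfl, rfl⟩, ⟨_, rfl, y, hy, hxy⟩⟩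
    exact le_antisymm (add_le_add_left (hamax hx) _) (hxy ▸ add_le_add_right (hbmin hy) _)
  have hmeas : NullMeasurableSet ({a} + B) :=
    (isCompact_singleton.add hB).measurableSet.nullMeasurableSet
  calc volume A + volume B = volume (A + {b}) + volume ({a} + B) := by simp
    _ = volume ((A + {b}) ∪ ({a} + B)) := (measure_union₀ hmeas hdisj).symm
    _ ≤ volume (A + B) := measure_mono <| union_subset
        (add_subset_add_left (singleton_subset_iff.2 hb))
        (add_subset_add_right (singleton_subset_iff.2 ha))

theorem volume_add_le_volume_add {A B : Set ℝ} (hA : MeasurableSet A) (hB : MeasurableSet B)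
    (hA₀ : A.Nonempty) (hB₀ : B.Nonempty) : volume A + volume B ≤ volume (A + B) := by
  obtain ⟨a, ha⟩ := hA₀
  obtain ⟨b, hb⟩ := hB₀
  rw [hA.measure_eq_iSup_isCompact, hB.measure_eq_iSup_isCompact]
  simp_rw [iSup_and']
  refine ENNReal.biSup_add_biSup_le' ⟨∅, by simp⟩ ⟨∅, by simp⟩ ?_
  rintro K ⟨hKA, hK⟩ L ⟨hLB, hL⟩
  calc volume K + volume L ≤ volume (insert a K) + volume (insert b L) := by
        gcongr <;> exact subset_insert _ _
    _ ≤ volume (insert a K + insert b L) :=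
        volume_add_le_volume_add_of_isCompact (hK.insert a) (hL.insert b) (insert_nonempty a K)
          (insert_nonempty b L)
    _ ≤ volume (A + B) :=
        measure_mono (add_subset_add (insert_subset ha hKA) (insert_subset hb hLB))

theorem lintegral_min_one_eq_lintegral_meas_lt {Ω : Type*} [MeasurableSpace Ω] (μ : Measure Ω)
    {u : Ω → ℝ≥0∞} (hu : Measurable u) :
    ∫⁻ x, min (u x) 1 ∂μ = ∫⁻ r in Ioo (0 : ℝ) 1, μ {x | ENNReal.ofReal r < u x} := by
  have hlt : ∀ r ∈ Ioi (0 : ℝ), μ {x | r < (min (u x) 1).toReal}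
      = (Iio (1 : ℝ)).indicator (fun r => μ {x | ENNReal.ofReal r < u x}) r := by
    intro r hr
    have hiff : ∀ x, r < (min (u x) 1).toReal ↔ ENNReal.ofReal r < u x ∧ r < 1 := by
      intro x
      rw [← ENNReal.ofReal_lt_iff_lt_toReal (le_of_lt hr) (by simp), lt_min_iff,
        ENNReal.ofReal_lt_one]
    by_cases h1 : r < 1 <;> simp [hiff, h1]
  calc ∫⁻ x, min (u x) 1 ∂μ = ∫⁻ x, ENNReal.ofReal (min (u x) 1).toReal ∂μ := by simp
    _ = ∫⁻ r in Ioi 0, μ {x | r < (min (u x) 1).toReal} :=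
        lintegral_eq_lintegral_meas_lt _ (by simp [EventuallyLE])
          (by fun_prop : Measurable _).aemeasurable
    _ = ∫⁻ r in Ioi 0, (Iio (1 : ℝ)).indicator (fun r => μ {x | ENNReal.ofReal r < u x}) r :=
        setLIntegral_congr_fun measurableSet_Ioi hlt
    _ = _ := by
        rw [setLIntegral_indicator measurableSet_Iio, inter_comm, Ioi_inter_Iio]

theorem ennreal_geom_mean_le_arith_mean2_weighted {t s : ℝ} (ht : 0 < t) (hs : 0 < s)
    (hts : t + s = 1) (a b : ℝ≥0∞) :
    a ^ t * b ^ s ≤ ENNReal.ofReal t * a + ENNReal.ofReal s * b := by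
  rcases eq_or_ne a ∞ with rfl | ha
  · simp [ENNReal.mul_top, ht]
  rcases eq_or_ne b ∞ with rfl | hb
  · simp [ENNReal.mul_top, hs]
  lift a to ℝ≥0 using ha
  lift b to ℝ≥0 using hb
  lift t to ℝ≥0 using ht.le
  lift s to ℝ≥0 using hs.le
  rw [← ENNReal.coe_rpow_of_nonneg _ t.coe_nonneg, ← ENNReal.coe_rpow_of_nonneg _ s.coe_nonneg,
    ENNReal.ofReal_coe_nnreal, ENNReal.ofReal_coe_nnreal]
  exact_mod_cast NNReal.geom_mean_le_arith_mean2_weighted t s a b (by exact_mod_cast hts)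

section Line

variable {t s : ℝ} {u v w : ℝ → ℝ≥0∞}

lemma volume_superlevel_add_le (ht : 0 < t) (hs : 0 < s) (hts : t + s = 1) (hu : Measurable u)
    (hv : Measurable v) (huvw : ∀ x y, u x ^ t * v y ^ s ≤ w (t * x + s * y)) {r : ℝ≥0∞}
    (hur : ∃ x, r < u x) (hvr : ∃ y, r < v y) :
    ENNReal.ofReal t * volume {x | r < u x} + ENNReal.ofReal s * volume {y | r < v y}
      ≤ volume {z | r < w z} := by
  have hsub : t • {x | r < u x} + s • {y | r < v y} ⊆ {z | r < w z} := by
    rintro _ ⟨_, ⟨x, hx, rfl⟩, _, ⟨y, hy, rfl⟩, rfl⟩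
    calc r = r ^ t * r ^ s := by
          rw [← ENNReal.rpow_add_of_nonneg _ _ ht.le hs.le, hts, ENNReal.rpow_one]
      _ < u x ^ t * v y ^ s :=
          ENNReal.mul_lt_mul (ENNReal.rpow_lt_rpow hx ht) (ENNReal.rpow_lt_rpow hy hs)
      _ ≤ w (t * x + s * y) := huvw x y
  calc ENNReal.ofReal t * volume {x | r < u x} + ENNReal.ofReal s * volume {y | r < v y}
      = volume (t • {x | r < u x}) + volume (s • {y | r < v y}) := by
        simp [abs_of_pos ht, abs_of_pos hs]
    _ ≤ volume (t • {x | r < u x} + s • {y | r < v y}) :=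
        volume_add_le_volume_add
          ((measurableSet_lt measurable_const hu).const_smul_of_ne_zero ht.ne')
          ((measurableSet_lt measurable_const hv).const_smul_of_ne_zero hs.ne')
          (Nonempty.smul_set hur) (Nonempty.smul_set hvr)
    _ ≤ volume {z | r < w z} := measure_mono hsub

/- Equal suprema make the superlevel sets of `u` and `v` nonempty for the same levels; otherwise
Brunn–Minkowski fails, since a sum with an empty set is empty. -/
lemma lintegral_add_le_of_iSup_eq_one (ht : 0 < t) (hs : 0 < s) (hts : t + s = 1)
    (hu : Measurable u) (hv : Measurable v) (hw : Measurable w)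
    (huvw : ∀ x y, u x ^ t * v y ^ s ≤ w (t * x + s * y))
    (hu₁ : (⨆ x, u x) = 1) (hv₁ : (⨆ y, v y) = 1) :
    ENNReal.ofReal t * (∫⁻ x, u x) + ENNReal.ofReal s * ∫⁻ y, v y ≤ ∫⁻ z, w z := by
  have hlayer : ∀ f : ℝ → ℝ≥0∞, Measurable f → (⨆ x, f x) = 1 →
      ∫⁻ x, f x = ∫⁻ r in Ioo (0 : ℝ) 1, volume {x | ENNReal.ofReal r < f x} := by
    intro f hf hf₁
    rw [← lintegral_min_one_eq_lintegral_meas_lt volume hf]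
    simp_rw [min_eq_left (hf₁ ▸ le_iSup f _)]
  have hanti : Antitone fun r : ℝ => ENNReal.ofReal t * volume {x | ENNReal.ofReal r < u x} := by
    intro r r' hr
    dsimp only
    gcongr
  calc ENNReal.ofReal t * (∫⁻ x, u x) + ENNReal.ofReal s * ∫⁻ y, v y
      = ∫⁻ r in Ioo (0 : ℝ) 1, (ENNReal.ofReal t * volume {x | ENNReal.ofReal r < u x}
          + ENNReal.ofReal s * volume {y | ENNReal.ofReal r < v y}) := by
        rw [hlayer u hu hu₁, hlayer v hv hv₁, lintegral_add_left hanti.measurable,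
          lintegral_const_mul' _ _ ENNReal.ofReal_ne_top,
          lintegral_const_mul' _ _ ENNReal.ofReal_ne_top]
    _ ≤ ∫⁻ r in Ioo (0 : ℝ) 1, volume {z | ENNReal.ofReal r < w z} := by
        refine setLIntegral_mono' measurableSet_Ioo fun r hr => ?_
        have hr₁ : ENNReal.ofReal r < 1 := ENNReal.ofReal_lt_one.2 hr.2
        exact volume_superlevel_add_le ht hs hts hu hv huvw
          (lt_iSup_iff.1 (hu₁ ▸ hr₁)) (lt_iSup_iff.1 (hv₁ ▸ hr₁))
    _ = ∫⁻ z, min (w z) 1 := (lintegral_min_one_eq_lintegral_meas_lt volume hw).symm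
    _ ≤ ∫⁻ z, w z := lintegral_mono fun z => min_le_left _ _

lemma ennreal_div_rpow_mul_div_rpow {t s : ℝ} (ht : 0 ≤ t) (hs : 0 ≤ s) {M : ℝ≥0∞} (hM₀ : M ≠ 0)
    (hM : M ≠ ∞) (N a b : ℝ≥0∞) :
    (a / M) ^ t * (b / N) ^ s = a ^ t * b ^ s / (M ^ t * N ^ s) := by
  rw [ENNReal.div_rpow_of_nonneg _ _ ht, ENNReal.div_rpow_of_nonneg _ _ hs,
    ENNReal.mul_div_mul_comm (.inl (by simp [hM₀, hM])) (.inl (by simp [hM₀, hM]))]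

lemma lintegral_rpow_mul_le_of_iSup_ne_top (ht : 0 < t) (hs : 0 < s) (hts : t + s = 1)
    (hu : Measurable u) (hv : Measurable v) (hw : Measurable w)
    (huvw : ∀ x y, u x ^ t * v y ^ s ≤ w (t * x + s * y))
    (hu_top : (⨆ x, u x) ≠ ∞) (hv_top : (⨆ y, v y) ≠ ∞) :
    (∫⁻ x, u x) ^ t * (∫⁻ y, v y) ^ s ≤ ∫⁻ z, w z := by
  set M := ⨆ x, u x
  set N := ⨆ y, v y
  rcases eq_or_ne M 0 with hM | hM
  · simp [show ∀ x, u x = 0 by simpa [M] using hM, ht]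
  rcases eq_or_ne N 0 with hN | hN
  · simp [show ∀ y, v y = 0 by simpa [N] using hN, hs]
  have hMt₀ : M ^ t ≠ 0 := by simp [hM, hu_top]
  have hMt : M ^ t ≠ ∞ := ENNReal.rpow_ne_top_of_nonneg ht.le hu_top
  have hNs₀ : N ^ s ≠ 0 := by simp [hN, hv_top]
  have hNs : N ^ s ≠ ∞ := ENNReal.rpow_ne_top_of_nonneg hs.le hv_top
  have hnormalized : ENNReal.ofReal t * (∫⁻ x, u x / M) + ENNReal.ofReal s * ∫⁻ y, v y / N
      ≤ ∫⁻ z, w z / (M ^ t * N ^ s) := by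
    refine lintegral_add_le_of_iSup_eq_one ht hs hts (hu.div_const M) (hv.div_const N)
      (hw.div_const _) (fun x y => ?_) ?_ ?_
    · rw [ennreal_div_rpow_mul_div_rpow ht.le hs.le hM hu_top]
      gcongr
      exact huvw x y
    · rw [← ENNReal.iSup_div, ENNReal.div_self hM hu_top]
    · rw [← ENNReal.iSup_div, ENNReal.div_self hN hv_top]
  have hmean := (ennreal_geom_mean_le_arith_mean2_weighted ht hs hts _ _).trans hnormalized
  simp_rw [div_eq_mul_inv] at hmean
  rw [lintegral_mul_const _ hu, lintegral_mul_const _ hv, lintegral_mul_const _ hw] at hmean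
  simp_rw [← div_eq_mul_inv] at hmean
  rwa [ennreal_div_rpow_mul_div_rpow ht.le hs.le hM hu_top,
    ENNReal.div_le_iff (mul_ne_zero hMt₀ hNs₀) (ENNReal.mul_ne_top hMt hNs),
    ENNReal.div_mul_cancel (mul_ne_zero hMt₀ hNs₀) (ENNReal.mul_ne_top hMt hNs)] at hmean

end Line

lemma tendsto_lintegral_min_natCast {Ω : Type*} [MeasurableSpace Ω] (μ : Measure Ω)
    {u : Ω → ℝ≥0∞} (hu : Measurable u) :
    Tendsto (fun n : ℕ => ∫⁻ x, min (u x) n ∂μ) atTop (𝓝 (∫⁻ x, u x ∂μ)) := by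
  refine lintegral_tendsto_of_tendsto_of_monotone (fun n => by fun_prop)
    (.of_forall fun x n m hnm => ?_) (.of_forall fun x => ?_)
  · dsimp only
    gcongr
  · simpa using (tendsto_const_nhds (x := u x)).min ENNReal.tendsto_nat_nhds_top

/-- The Prékopa–Leindler inequality for a measure. It holds for Lebesgue measure. The two
weights are `t` and `s`, and functions are `ℝ≥0∞`-valued so that no integrability is required. -/
def PrekopaLeindler {E : Type*} [AddCommMonoid E] [Module ℝ E] [MeasurableSpace E]
    (μ : Measure E) : Prop :=
  ∀ ⦃t s : ℝ⦄, 0 < t → 0 < s → t + s = 1 → ∀ ⦃u v w : E → ℝ≥0∞⦄,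
    Measurable u → Measurable v → Measurable w →
    (∀ x y, u x ^ t * v y ^ s ≤ w (t • x + s • y)) →
    (∫⁻ x, u x ∂μ) ^ t * (∫⁻ y, v y ∂μ) ^ s ≤ ∫⁻ z, w z ∂μ

namespace PrekopaLeindler

theorem volume_real : PrekopaLeindler (volume : Measure ℝ) := by
  intro t s ht hs hts u v w hu hv hw huvw
  rcases eq_or_ne (∫⁻ x, u x) 0 with hu₀ | hu₀
  · simp [hu₀, ht]
  rcases eq_or_ne (∫⁻ y, v y) 0 with hv₀ | hv₀
  · simp [hv₀, hs]
  have hlim : Tendsto (fun n : ℕ => (∫⁻ x, min (u x) n) ^ t * (∫⁻ y, min (v y) n) ^ s) atTop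
      (𝓝 ((∫⁻ x, u x) ^ t * (∫⁻ y, v y) ^ s)) :=
    ENNReal.Tendsto.mul ((tendsto_lintegral_min_natCast volume hu).ennrpow_const t)
      (.inl (by simp [hu₀, ht.not_gt]))
      ((tendsto_lintegral_min_natCast volume hv).ennrpow_const s)
      (.inl (by simp [hv₀, hs.not_gt]))
  refine le_of_tendsto' hlim fun n => ?_
  have hbdd : ∀ f : ℝ → ℝ≥0∞, (⨆ x, min (f x) n) ≠ ∞ := fun f =>
    ne_top_of_le_ne_top (ENNReal.natCast_ne_top n) (iSup_le fun x => min_le_right _ _)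
  refine lintegral_rpow_mul_le_of_iSup_ne_top ht hs hts (by fun_prop) (by fun_prop) hw
    (fun x y => ?_) (hbdd u) (hbdd v)
  calc min (u x) n ^ t * min (v y) n ^ s ≤ u x ^ t * v y ^ s := by
        gcongr <;> exact min_le_left _ _
    _ ≤ w (t * x + s * y) := huvw x y

section Algebra

variable {E F : Type*} [AddCommMonoid E] [Module ℝ E] [MeasurableSpace E]
  [AddCommMonoid F] [Module ℝ F] [MeasurableSpace F] {μ : Measure E} {ν : Measure F}

theorem dirac_zero : PrekopaLeindler (Measure.dirac (0 : E)) := by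
  intro t s _ _ _ u v w hu hv hw huvw
  simpa [lintegral_dirac', hu, hv, hw] using huvw 0 0

theorem prod [SFinite ν] (hμ : PrekopaLeindler μ) (hν : PrekopaLeindler ν) :
    PrekopaLeindler (μ.prod ν) := by
  intro t s ht hs hts u v w hu hv hw huvw
  simp_rw [lintegral_prod _ hu.aemeasurable, lintegral_prod _ hv.aemeasurable,
    lintegral_prod _ hw.aemeasurable]
  refine hμ ht hs hts hu.lintegral_prod_right' hv.lintegral_prod_right' hw.lintegral_prod_right'
    fun x x' => ?_
  exact hν ht hs hts (hu.comp measurable_prodMk_left) (hv.comp measurable_prodMk_left)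
    (hw.comp measurable_prodMk_left) fun y y' => huvw (x, y) (x', y')

theorem map (hμ : PrekopaLeindler μ) {f : E →ₗ[ℝ] F} (hf : Measurable f) :
    PrekopaLeindler (μ.map f) := by
  intro t s ht hs hts u v w hu hv hw huvw
  rw [lintegral_map hu hf, lintegral_map hv hf, lintegral_map hw hf]
  exact hμ ht hs hts (hu.comp hf) (hv.comp hf) (hw.comp hf) fun x y => by
    simpa using huvw (f x) (f y)

theorem smul (hμ : PrekopaLeindler μ) (c : ℝ≥0) : PrekopaLeindler (c • μ) := by
  intro t s ht hs hts u v w hu hv hw huvw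
  simp_rw [lintegral_smul_measure, ENNReal.smul_def, smul_eq_mul]
  calc (c * ∫⁻ x, u x ∂μ) ^ t * (c * ∫⁻ y, v y ∂μ) ^ s
      = (c : ℝ≥0∞) ^ (t + s) * ((∫⁻ x, u x ∂μ) ^ t * (∫⁻ y, v y ∂μ) ^ s) := by
        rw [ENNReal.mul_rpow_of_nonneg _ _ ht.le, ENNReal.mul_rpow_of_nonneg _ _ hs.le,
          ENNReal.rpow_add_of_nonneg _ _ ht.le hs.le]
        ring
    _ ≤ c * ∫⁻ z, w z ∂μ := by
        rw [hts, ENNReal.rpow_one]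
        gcongr
        exact hμ ht hs hts hu hv hw huvw

end Algebra

section Haar

variable {E F : Type*} [NormedAddCommGroup E] [NormedSpace ℝ E] [MeasurableSpace E] [BorelSpace E]
  [NormedAddCommGroup F] [NormedSpace ℝ F] [FiniteDimensional ℝ F] [MeasurableSpace F]
  [BorelSpace F]

theorem of_continuousLinearEquiv {μ : Measure E} [μ.IsAddHaarMeasure] (hμ : PrekopaLeindler μ)
    (e : E ≃L[ℝ] F) (ν : Measure F) [ν.IsAddHaarMeasure] : PrekopaLeindler ν := by
  rw [Measure.isAddLeftInvariant_eq_smul ν (μ.map e)]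
  exact (hμ.map (f := e.toLinearMap) e.continuous.measurable).smul _

theorem volume_pi_fin (n : ℕ) : PrekopaLeindler (volume : Measure (Fin n → ℝ)) := by
  induction n with
  | zero =>
    rw [volume_pi, Measure.pi_of_empty (x := 0)]
    exact dirac_zero
  | succ n ih =>
    exact (volume_real.prod ih).of_continuousLinearEquiv (Fin.consEquivL ℝ fun _ => ℝ) volume

theorem of_isAddHaarMeasure [FiniteDimensional ℝ E] (ρ : Measure E) [ρ.IsAddHaarMeasure] :
    PrekopaLeindler ρ :=
  (volume_pi_fin (Module.finrank ℝ E)).of_continuousLinearEquiv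
    (ContinuousLinearEquiv.ofFinrankEq (by simp)) ρ

end Haar

section Tilted

variable {E : Type*} [NormedAddCommGroup E] [NormedSpace ℝ E] {φ : ℝ → ℝ} {V : E → ℝ} {t s : ℝ}

lemma exp_mul_rpow_mul_rpow_le_of_uniformConvexOn (hV : UniformConvexOn univ φ V) (ht : 0 < t)
    (hs : 0 < s) (hts : t + s = 1) {Z : ℝ} (hZ : 0 ≤ Z) (x y : E) :
    Real.exp (t * s * φ ‖x - y‖) * ((Real.exp (-V x) / Z) ^ t * (Real.exp (-V y) / Z) ^ s)
      ≤ Real.exp (-V (t • x + s • y)) / Z := by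
  have hconv : V (t • x + s • y) ≤ t * V x + s * V y - t * s * φ ‖x - y‖ := by
    simpa using hV.2 (mem_univ x) (mem_univ y) ht.le hs.le hts
  calc Real.exp (t * s * φ ‖x - y‖) * ((Real.exp (-V x) / Z) ^ t * (Real.exp (-V y) / Z) ^ s)
      = Real.exp (t * s * φ ‖x - y‖) * (Real.exp (-V x * t) * Real.exp (-V y * s))
          / (Z ^ t * Z ^ s) := by
        rw [Real.div_rpow (Real.exp_nonneg _) hZ, Real.div_rpow (Real.exp_nonneg _) hZ,
          ← Real.exp_mul, ← Real.exp_mul]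
        ring
    _ = Real.exp (t * s * φ ‖x - y‖ - t * V x - s * V y) / Z := by
        rw [← Real.rpow_add_of_nonneg hZ ht.le hs.le, hts, Real.rpow_one, ← Real.exp_add,
          ← Real.exp_add]
        ring_nf
    _ ≤ Real.exp (-V (t • x + s • y)) / Z := by
        gcongr
        linarith

theorem lintegral_tilted_le [MeasurableSpace E] {ρ : Measure E} (hρ : PrekopaLeindler ρ)
    (hV : UniformConvexOn univ φ V) (hVm : Measurable V) (ht : 0 < t) (hs : 0 < s)
    (hts : t + s = 1) {u v w : E → ℝ≥0∞} (hu : Measurable u) (hv : Measurable v)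
    (hw : Measurable w)
    (huvw : ∀ x y, u x ^ t * v y ^ s
      ≤ ENNReal.ofReal (Real.exp (t * s * φ ‖x - y‖)) * w (t • x + s • y)) :
    (∫⁻ x, u x ∂(ρ.tilted fun x => -V x)) ^ t * (∫⁻ y, v y ∂(ρ.tilted fun x => -V x)) ^ s
      ≤ ∫⁻ z, w z ∂(ρ.tilted fun x => -V x) := by
  set Z := ∫ x, Real.exp (-V x) ∂ρ
  have hZ : 0 ≤ Z := integral_nonneg fun x => Real.exp_nonneg _
  set p : E → ℝ≥0∞ := fun x => ENNReal.ofReal (Real.exp (-V x) / Z)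
  have hpm : Measurable p := by fun_prop
  have hp_le : ∀ x y, ENNReal.ofReal (Real.exp (t * s * φ ‖x - y‖)) * (p x ^ t * p y ^ s)
      ≤ p (t • x + s • y) := by
    intro x y
    rw [ENNReal.ofReal_rpow_of_nonneg (by positivity) ht.le,
      ENNReal.ofReal_rpow_of_nonneg (by positivity) hs.le, ← ENNReal.ofReal_mul (by positivity),
      ← ENNReal.ofReal_mul (by positivity)]
    exact ENNReal.ofReal_le_ofReal
      (exp_mul_rpow_mul_rpow_le_of_uniformConvexOn hV ht hs hts hZ x y)
  simp_rw [lintegral_tilted]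
  refine hρ ht hs hts (hpm.mul hu) (hpm.mul hv) (hpm.mul hw) fun x y => ?_
  calc (p x * u x) ^ t * (p y * v y) ^ s = p x ^ t * p y ^ s * (u x ^ t * v y ^ s) := by
        rw [ENNReal.mul_rpow_of_nonneg _ _ ht.le, ENNReal.mul_rpow_of_nonneg _ _ hs.le]
        ring
    _ ≤ p x ^ t * p y ^ s
          * (ENNReal.ofReal (Real.exp (t * s * φ ‖x - y‖)) * w (t • x + s • y)) :=
        mul_le_mul' le_rfl (huvw x y)
    _ = ENNReal.ofReal (Real.exp (t * s * φ ‖x - y‖)) * (p x ^ t * p y ^ s)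
          * w (t • x + s • y) := by ring
    _ ≤ p (t • x + s • y) * w (t • x + s • y) :=
        mul_le_mul' (hp_le x y) le_rfl

end Tilted

end PrekopaLeindler

section Integrability

variable {E : Type*} [NormedAddCommGroup E] [NormedSpace ℝ E] [FiniteDimensional ℝ E]

lemma continuous_of_strongConvexOn {V : E → ℝ} {m : ℝ} (hm : 0 ≤ m)
    (hV : StrongConvexOn univ m V) : Continuous V :=
  (UniformConvexOn.convexOn hV fun r => by dsimp; positivity).locallyLipschitz.continuous

lemma exists_quadratic_le_of_strongConvexOn {V : E → ℝ} {m : ℝ} (hm : 0 ≤ m)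
    (hV : StrongConvexOn univ m V) : ∃ a b : ℝ, ∀ x, a - b * ‖x‖ + m / 2 * ‖x‖ ^ 2 ≤ V x := by
  have : ProperSpace E := FiniteDimensional.proper ℝ E
  obtain ⟨C, hC⟩ := (isCompact_closedBall (0 : E) 1).exists_bound_of_continuousOn
    (continuous_of_strongConvexOn hm hV).continuousOn
  have hCV : ∀ x, ‖x‖ ≤ 1 → |V x| ≤ C := fun x hx => hC x (by simpa using hx)
  refine ⟨-C, 2 * C + m / 2, fun x => ?_⟩
  have hC₀ : 0 ≤ C := (abs_nonneg _).trans (hCV 0 (by simp))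
  rcases le_total ‖x‖ 1 with hx | hx
  · have hsq : m / 2 * ‖x‖ ^ 2 ≤ m / 2 * ‖x‖ := by
      gcongr
      exact pow_le_of_le_one (norm_nonneg x) hx two_ne_zero
    nlinarith [neg_le_of_abs_le (hCV x hx), norm_nonneg x]
  · -- Strong convexity on the segment from `x` to `0`, at the point where it meets the unit sphere.
    have hx₀ : 0 < ‖x‖ := one_pos.trans_le hx
    have hconv : V (‖x‖⁻¹ • x)
        ≤ ‖x‖⁻¹ * V x + (1 - ‖x‖⁻¹) * V 0 - ‖x‖⁻¹ * (1 - ‖x‖⁻¹) * (m / 2 * ‖x‖ ^ 2) := by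
      simpa using hV.2 (mem_univ x) (mem_univ 0) (inv_nonneg.2 hx₀.le)
        (sub_nonneg.2 (inv_le_one_of_one_le₀ hx)) (add_sub_cancel _ _)
    have hunit : -C ≤ V (‖x‖⁻¹ • x) :=
      neg_le_of_abs_le (hCV _ (by rw [norm_smul, norm_inv, norm_norm, inv_mul_cancel₀ hx₀.ne']))
    have hzero : V 0 ≤ C := le_of_abs_le (hCV 0 (by simp))
    have hscaled : -C * ‖x‖ ≤ V x + (‖x‖ - 1) * V 0 - (m / 2 * ‖x‖ ^ 2 - m / 2 * ‖x‖) := by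
      calc -C * ‖x‖ ≤ (‖x‖⁻¹ * V x + (1 - ‖x‖⁻¹) * V 0
            - ‖x‖⁻¹ * (1 - ‖x‖⁻¹) * (m / 2 * ‖x‖ ^ 2)) * ‖x‖ := by
            gcongr
            exact hunit.trans hconv
        _ = _ := by
            field_simp
    nlinarith

variable [MeasurableSpace E] [BorelSpace E] (ρ : Measure E) [ρ.IsAddHaarMeasure]

lemma integrable_exp_of_le_quadratic {g : E → ℝ} (hg : AEStronglyMeasurable g ρ) {a b c : ℝ}
    (hc : 0 < c) (hbound : ∀ x, g x ≤ a + b * ‖x‖ - c * ‖x‖ ^ 2) :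
    Integrable (fun x => Real.exp (g x)) ρ := by
  set r : ℝ := Module.finrank ℝ E + 1
  refine ((integrable_one_add_norm (μ := ρ) (r := r) (by simp [r])).const_mul
    (Real.exp (a + (b + r) ^ 2 / (4 * c)))).mono' (Real.continuous_exp.comp_aestronglyMeasurable hg)
    (.of_forall fun x => ?_)
  have hlog : r * Real.log (1 + ‖x‖) ≤ r * ‖x‖ := by
    gcongr
    linarith [Real.log_le_sub_one_of_pos (show 0 < 1 + ‖x‖ by positivity)]
  have hsquare : (b + r) * ‖x‖ - c * ‖x‖ ^ 2 ≤ (b + r) ^ 2 / (4 * c) := by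
    rw [le_div_iff₀ (by positivity)]
    linarith [sq_nonneg (b + r - 2 * c * ‖x‖)]
  rw [Real.norm_of_nonneg (Real.exp_nonneg _), Real.rpow_def_of_pos (by positivity),
    ← Real.exp_add]
  exact Real.exp_le_exp.2 (by linarith [hbound x])

variable {V f : E → ℝ} {m : ℝ} {K : ℝ≥0}

lemma integrable_exp_sub_of_strongConvexOn (hm : 0 < m) (hV : StrongConvexOn univ m V)
    (hf : LipschitzWith K f) : Integrable (fun x => Real.exp (f x - V x)) ρ := by
  obtain ⟨a, b, hab⟩ := exists_quadratic_le_of_strongConvexOn hm.le hV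
  have hVc : Continuous V := continuous_of_strongConvexOn hm.le hV
  refine integrable_exp_of_le_quadratic ρ (hf.continuous.sub hVc).aestronglyMeasurable
    (a := f 0 - a) (b := K + b) (half_pos hm) fun x => ?_
  have hfx : f x - f 0 ≤ K * ‖x‖ := by
    simpa using (le_abs_self _).trans (hf.dist_le_mul x 0)
  linarith [hab x]

lemma isProbabilityMeasure_tilted_neg_of_strongConvexOn (hm : 0 < m)
    (hV : StrongConvexOn univ m V) : IsProbabilityMeasure (ρ.tilted fun x => -V x) :=
  isProbabilityMeasure_tilted <| by
    simpa using integrable_exp_sub_of_strongConvexOn ρ hm hV (LipschitzWith.const (0 : ℝ))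

lemma integrable_exp_tilted_neg_of_strongConvexOn (hm : 0 < m) (hV : StrongConvexOn univ m V)
    (hf : LipschitzWith K f) :
    Integrable (fun x => Real.exp (f x)) (ρ.tilted fun x => -V x) := by
  have hZ : Integrable (fun x => Real.exp (-V x)) ρ := by
    simpa using integrable_exp_sub_of_strongConvexOn ρ hm hV (LipschitzWith.const (0 : ℝ))
  rw [integrable_tilted_iff hZ]
  simpa [← Real.exp_add, sub_eq_neg_add] using integrable_exp_sub_of_strongConvexOn ρ hm hV hf

lemma integrable_exp_mul_tilted_neg_of_strongConvexOn (hm : 0 < m) (hV : StrongConvexOn univ m V)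
    (hf : LipschitzWith K f) (t : ℝ) :
    Integrable (fun x => Real.exp (t * f x)) (ρ.tilted fun x => -V x) :=
  integrable_exp_tilted_neg_of_strongConvexOn ρ hm hV ((lipschitzWith_smul t).comp hf)

end Integrability

section Moments

variable {Ω : Type*} [MeasurableSpace Ω] {μ : Measure Ω} {X : Ω → ℝ}

lemma cgf_one_le_integral_add [IsProbabilityMeasure μ] (hX : 0 ∈ interior (integrableExpSet X μ))
    {C : ℝ} (h : ∀ t ∈ Ioo (0 : ℝ) 1, t * cgf X μ 1 ≤ cgf X μ t + t * (1 - t) * C) :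
    cgf X μ 1 ≤ μ[X] + C := by
  have hderiv : HasDerivAt (cgf X μ) μ[X] 0 := by
    simpa [deriv_cgf_zero hX] using (analyticAt_cgf hX).differentiableAt.hasDerivAt
  have hslope : Tendsto (fun t => t⁻¹ * cgf X μ t) (𝓝[>] 0) (𝓝 μ[X]) := by
    simpa using hderiv.tendsto_slope_zero_right
  have hlinear : Tendsto (fun t : ℝ => (1 - t) * C) (𝓝[>] 0) (𝓝 C) :=
    (Continuous.tendsto' (by fun_prop) _ _ (by simp)).mono_left nhdsWithin_le_nhds
  refine ge_of_tendsto (hslope.add hlinear) ?_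
  filter_upwards [Ioo_mem_nhdsGT zero_lt_one] with t ht
  calc cgf X μ 1 = t⁻¹ * (t * cgf X μ 1) := by rw [inv_mul_cancel_left₀ ht.1.ne']
    _ ≤ t⁻¹ * (cgf X μ t + t * (1 - t) * C) := by
        gcongr
        exacts [inv_nonneg.2 ht.1.le, h t ht]
    _ = t⁻¹ * cgf X μ t + (1 - t) * C := by
        have := ht.1.ne'
        field_simp

lemma hasSubgaussianMGF_sub_integral [IsProbabilityMeasure μ] {c : ℝ≥0}
    (hint : ∀ t, Integrable (fun ω => Real.exp (t * X ω)) μ)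
    (hcgf : ∀ t, cgf X μ t ≤ t * μ[X] + c * t ^ 2 / 2) :
    HasSubgaussianMGF (fun ω => X ω - μ[X]) c μ where
  integrable_exp_mul t := by
    simpa [mul_sub, Real.exp_sub] using (hint t).div_const _
  mgf_le t := by
    calc mgf (fun ω => X ω - μ[X]) μ t = Real.exp (cgf X μ t - t * μ[X]) := by
          simp [sub_eq_add_neg, mgf_add_const, Real.exp_add, exp_cgf (hint t)]
      _ ≤ Real.exp (c * t ^ 2 / 2) := by
          gcongr
          linarith [hcgf t]

end Moments

section Lipschitz

lemma mul_le_add_of_lipschitzWith {E : Type*} [NormedAddCommGroup E] [NormedSpace ℝ E]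
    {f : E → ℝ} {K : ℝ≥0} (hf : LipschitzWith K f) {m : ℝ} (hm : 0 < m) {t s : ℝ} (ht : 0 ≤ t)
    (hs : 0 ≤ s) (hts : t + s = 1) (x y : E) :
    t * f x ≤ t * f (t • x + s • y) + t * s * (m / 2 * ‖x - y‖ ^ 2 + K ^ 2 / (2 * m)) := by
  have hdist : dist x (t • x + s • y) = s * ‖x - y‖ := by
    have hsub : x - (t • x + s • y) = s • (x - y) := by
      obtain rfl : t = 1 - s := eq_sub_of_add_eq hts
      module
    rw [dist_eq_norm, hsub, norm_smul, Real.norm_of_nonneg hs]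
  have hyoung : K * ‖x - y‖ ≤ m / 2 * ‖x - y‖ ^ 2 + K ^ 2 / (2 * m) := by
    have hexpand : (m * ‖x - y‖ - K) ^ 2 / (2 * m)
        = m / 2 * ‖x - y‖ ^ 2 + K ^ 2 / (2 * m) - K * ‖x - y‖ := by
      field_simp
      ring
    exact sub_nonneg.1 (hexpand ▸ by positivity)
  have hlip : f x - f (t • x + s • y) ≤ K * (s * ‖x - y‖) :=
    hdist ▸ (le_abs_self _).trans (hf.dist_le_mul x _)
  linarith [mul_le_mul_of_nonneg_left hlip ht, mul_le_mul_of_nonneg_left hyoung (mul_nonneg ht hs)]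

variable {E : Type*} [NormedAddCommGroup E] [NormedSpace ℝ E] [MeasurableSpace E] [BorelSpace E]
  {V f : E → ℝ} {K : ℝ≥0}

theorem lintegral_exp_rpow_mul_le_of_prekopaLeindler {ρ : Measure E} (hρ : PrekopaLeindler ρ)
    {m : ℝ} (hm : 0 < m) (hV : StrongConvexOn univ m V) (hVm : Measurable V)
    (hf : LipschitzWith K f) {t s : ℝ} (ht : 0 < t) (hs : 0 < s) (hts : t + s = 1) :
    (∫⁻ x, ENNReal.ofReal (Real.exp (f x)) ∂(ρ.tilted fun x => -V x)) ^ t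
        * (ρ.tilted (fun x => -V x) univ) ^ s
      ≤ ENNReal.ofReal (Real.exp (t * s * (K ^ 2 / (2 * m))))
        * ∫⁻ x, ENNReal.ofReal (Real.exp (t * f x)) ∂(ρ.tilted fun x => -V x) := by
  have hfm : Measurable f := hf.continuous.measurable
  rw [← lintegral_one, ← lintegral_const_mul _ (by fun_prop)]
  refine hρ.lintegral_tilted_le hV hVm ht hs hts (by fun_prop) (by fun_prop) (by fun_prop)
    fun x y => ?_
  rw [ENNReal.one_rpow, mul_one, ENNReal.ofReal_rpow_of_pos (Real.exp_pos _), ← Real.exp_mul,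
    ← ENNReal.ofReal_mul (by positivity), ← ENNReal.ofReal_mul (by positivity), ← Real.exp_add,
    ← Real.exp_add]
  refine ENNReal.ofReal_le_ofReal (Real.exp_le_exp.2 ?_)
  linarith [mul_le_add_of_lipschitzWith hf hm ht.le hs.le hts x y]

variable [FiniteDimensional ℝ E] (ρ : Measure E) [ρ.IsAddHaarMeasure]

lemma mul_cgf_one_le_of_strongConvexOn {m : ℝ} (hm : 0 < m) (hV : StrongConvexOn univ m V)
    (hf : LipschitzWith K f) {t : ℝ} (ht : t ∈ Ioo (0 : ℝ) 1) :
    t * cgf f (ρ.tilted fun x => -V x) 1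
      ≤ cgf f (ρ.tilted fun x => -V x) t + t * (1 - t) * (K ^ 2 / (2 * m)) := by
  set ν := ρ.tilted fun x => -V x
  have : IsProbabilityMeasure ν := isProbabilityMeasure_tilted_neg_of_strongConvexOn ρ hm hV
  have hint : ∀ r, Integrable (fun x => Real.exp (r * f x)) ν :=
    integrable_exp_mul_tilted_neg_of_strongConvexOn ρ hm hV hf
  have hmgf : ∀ r, ∫⁻ x, ENNReal.ofReal (Real.exp (r * f x)) ∂ν = ENNReal.ofReal (mgf f ν r) :=
    fun r => (ofReal_integral_eq_lintegral_ofReal (hint r)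
      (.of_forall fun x => Real.exp_nonneg _)).symm
  have hPL := lintegral_exp_rpow_mul_le_of_prekopaLeindler (.of_isAddHaarMeasure ρ) hm hV
    (continuous_of_strongConvexOn hm.le hV).measurable hf ht.1 (sub_pos.2 ht.2) (add_sub_cancel t 1)
  have hreal : mgf f ν 1 ^ t ≤ Real.exp (t * (1 - t) * (K ^ 2 / (2 * m))) * mgf f ν t := by
    rw [← ENNReal.ofReal_le_ofReal_iff (mul_nonneg (Real.exp_nonneg _) mgf_nonneg),
      ENNReal.ofReal_mul (Real.exp_nonneg _), ← ENNReal.ofReal_rpow_of_nonneg mgf_nonneg ht.1.le,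
      ← hmgf, ← hmgf]
    simpa [ν] using hPL
  have hlog := Real.log_le_log (Real.rpow_pos_of_pos (mgf_pos (hint 1)) t) hreal
  rw [Real.log_rpow (mgf_pos (hint 1)), Real.log_mul (Real.exp_ne_zero _) (mgf_pos (hint t)).ne',
    Real.log_exp] at hlog
  simp only [cgf]
  linarith

theorem hasSubgaussianMGF_of_strongConvexOn {m : ℝ≥0} (hm : 0 < m) (hV : StrongConvexOn univ m V)
    (hf : LipschitzWith K f) :
    HasSubgaussianMGF (fun x => f x - ∫ y, f y ∂(ρ.tilted fun x => -V x)) (K ^ 2 / m)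
      (ρ.tilted fun x => -V x) := by
  set ν := ρ.tilted fun x => -V x
  have : IsProbabilityMeasure ν := isProbabilityMeasure_tilted_neg_of_strongConvexOn ρ hm hV
  refine hasSubgaussianMGF_sub_integral
    (integrable_exp_mul_tilted_neg_of_strongConvexOn ρ hm hV hf) fun t => ?_
  have htf : LipschitzWith (‖t‖₊ * K) fun x => t * f x := (lipschitzWith_smul t).comp hf
  have hmem : 0 ∈ interior (integrableExpSet (fun x => t * f x) ν) := by
    have huniv : integrableExpSet (fun x => t * f x) ν = univ := eq_univ_of_forall
      (integrable_exp_mul_tilted_neg_of_strongConvexOn ρ hm hV htf)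
    simp [huniv]
  calc cgf f ν t = cgf (fun x => t * f x) ν 1 := by simp [cgf, mgf_const_mul]
    _ ≤ ∫ x, t * f x ∂ν + (‖t‖₊ * K : ℝ≥0) ^ 2 / (2 * m) :=
        cgf_one_le_integral_add hmem fun r hr => mul_cgf_one_le_of_strongConvexOn ρ hm hV htf hr
    _ = t * ∫ x, f x ∂ν + (K ^ 2 / m : ℝ≥0) * t ^ 2 / 2 := by
        rw [integral_const_mul]
        push_cast
        rw [Real.norm_eq_abs, mul_pow, sq_abs]
        ring

end Lipschitz

section Subgaussian

lemma one_add_sq_div_two_le_cosh (x : ℝ) : 1 + x ^ 2 / 2 ≤ Real.cosh x := by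
  have hhalf : (x / 2) ^ 2 ≤ Real.sinh (x / 2) ^ 2 := by
    rw [sq_le_sq, Real.abs_sinh]
    exact Real.self_le_sinh_iff.2 (abs_nonneg _)
  calc 1 + x ^ 2 / 2 = (1 + (x / 2) ^ 2) + (x / 2) ^ 2 := by ring
    _ ≤ (1 + Real.sinh (x / 2) ^ 2) + Real.sinh (x / 2) ^ 2 := by gcongr
    _ = Real.cosh x := by
        rw [add_comm 1, ← Real.cosh_sq, ← Real.cosh_two_mul, mul_div_cancel₀ _ two_ne_zero]

variable {Ω : Type*} [MeasurableSpace Ω] {μ : Measure Ω} [IsProbabilityMeasure μ] {X : Ω → ℝ}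
  {c : ℝ≥0}

lemma sq_div_two_mul_integral_sq_le_of_hasSubgaussianMGF (hX : HasSubgaussianMGF X c μ) (t : ℝ) :
    t ^ 2 / 2 * ∫ ω, X ω ^ 2 ∂μ ≤ Real.exp (c * t ^ 2 / 2) - 1 := by
  have hsq : Integrable (fun ω => X ω ^ 2) μ := (hX.memLp 2).integrable_sq
  have hcosh : ∫ ω, Real.cosh (t * X ω) ∂μ = (mgf X μ t + mgf X μ (-t)) / 2 := by
    simp_rw [Real.cosh_eq, ← neg_mul]
    rw [integral_div, integral_add (hX.integrable_exp_mul t) (hX.integrable_exp_mul (-t))]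
    rfl
  have hcosh_int : Integrable (fun ω => Real.cosh (t * X ω)) μ := by
    simp_rw [Real.cosh_eq, ← neg_mul]
    exact ((hX.integrable_exp_mul t).add (hX.integrable_exp_mul (-t))).div_const 2
  have hle : 1 + t ^ 2 / 2 * ∫ ω, X ω ^ 2 ∂μ ≤ ∫ ω, Real.cosh (t * X ω) ∂μ := by
    calc 1 + t ^ 2 / 2 * ∫ ω, X ω ^ 2 ∂μ = ∫ ω, (1 + t ^ 2 / 2 * X ω ^ 2) ∂μ := by
          rw [integral_add (integrable_const _) (hsq.const_mul _), integral_const_mul]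
          simp
      _ ≤ ∫ ω, Real.cosh (t * X ω) ∂μ :=
          integral_mono ((integrable_const _).add (hsq.const_mul _)) hcosh_int fun ω => by
            simpa [mul_pow, mul_div_right_comm] using one_add_sq_div_two_le_cosh (t * X ω)
  have hneg := hX.mgf_le (-t)
  rw [neg_sq] at hneg
  linarith [hX.mgf_le t]

lemma integral_sq_le_of_hasSubgaussianMGF (hX : HasSubgaussianMGF X c μ) :
    ∫ ω, X ω ^ 2 ∂μ ≤ c := by
  have hderiv : HasDerivAt (fun h : ℝ => Real.exp (c * h)) c 0 := by
    simpa using ((hasDerivAt_id (0 : ℝ)).const_mul (c : ℝ)).exp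
  have hslope : Tendsto (fun h : ℝ => h⁻¹ * (Real.exp (c * h) - 1)) (𝓝[>] 0) (𝓝 c) := by
    simpa using hderiv.tendsto_slope_zero_right
  refine ge_of_tendsto hslope ?_
  filter_upwards [self_mem_nhdsWithin] with h hh
  have hsqrt : √(2 * h) ^ 2 = 2 * h := Real.sq_sqrt (mul_nonneg zero_le_two hh.le)
  have hbound := sq_div_two_mul_integral_sq_le_of_hasSubgaussianMGF hX √(2 * h)
  have hexponent : c * (2 * h) / 2 = c * h := by ring
  rwa [hsqrt, hexponent, mul_div_cancel_left₀ _ two_ne_zero, ← le_inv_mul_iff₀ hh] at hbound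

lemma variance_le_of_hasSubgaussianMGF (hX : HasSubgaussianMGF X c μ) : Var[X; μ] ≤ c :=
  (variance_le_expectation_sq hX.aestronglyMeasurable).trans
    (integral_sq_le_of_hasSubgaussianMGF hX)

lemma ofReal_one_sub_le_measure_of_hasSubgaussianMGF (hX : HasSubgaussianMGF X c μ) (hc : 0 < c)
    {δ : ℝ} (hδ₀ : 0 < δ) (hδ₁ : δ ≤ 1) :
    ENNReal.ofReal (1 - δ) ≤ μ {ω | X ω ≤ √(2 * c * Real.log (1 / δ))} := by
  set r := √(2 * c * Real.log (1 / δ))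
  have hlog : 0 ≤ Real.log (1 / δ) := Real.log_nonneg ((one_le_div hδ₀).2 hδ₁)
  have hexp : Real.exp (-r ^ 2 / (2 * c)) = δ := by
    rw [Real.sq_sqrt (by positivity), neg_div, mul_div_cancel_left₀ _ (by positivity),
      one_div, Real.log_inv, neg_neg, Real.exp_log hδ₀]
  have htail : μ.real {ω | X ω ≤ r}ᶜ ≤ δ := by
    calc μ.real {ω | X ω ≤ r}ᶜ ≤ μ.real {ω | r ≤ X ω} :=
          measureReal_mono fun ω (hω : ¬X ω ≤ r) => (not_le.1 hω).le
      _ ≤ δ := hexp ▸ hX.measure_ge_le (Real.sqrt_nonneg _)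
  have hunion : 1 ≤ μ.real {ω | X ω ≤ r} + μ.real {ω | X ω ≤ r}ᶜ := by
    simpa using measureReal_union_le (μ := μ) {ω | X ω ≤ r} {ω | X ω ≤ r}ᶜ
  rw [ENNReal.ofReal_le_iff_le_toReal (measure_ne_top _ _)]
  change 1 - δ ≤ μ.real _
  linarith

end Subgaussian

section SecondMoment

variable {Ω : Type*} [MeasurableSpace Ω] {μ : Measure Ω} [IsProbabilityMeasure μ]

lemma integral_le_sqrt_integral_sq {X : Ω → ℝ} (hX : MemLp X 2 μ) :
    ∫ ω, X ω ∂μ ≤ √(∫ ω, X ω ^ 2 ∂μ) := by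
  refine Real.le_sqrt_of_sq_le ?_
  have hvar := variance_eq_sub hX ▸ variance_nonneg X μ
  exact sub_nonneg.1 hvar

variable {E : Type*} [NormedAddCommGroup E] [InnerProductSpace ℝ E] [FiniteDimensional ℝ E]

lemma integral_norm_sub_integral_sq_le {X : Ω → E} (hX : MemLp X 2 μ) {c : ℝ}
    (hvar : ∀ u : E, ‖u‖ = 1 → Var[fun ω => inner ℝ u (X ω); μ] ≤ c) :
    ∫ ω, ‖X ω - μ[X]‖ ^ 2 ∂μ ≤ Module.finrank ℝ E * c := by
  set b := stdOrthonormalBasis ℝ E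
  have hXb : ∀ i, MemLp (fun ω => inner ℝ (b i) (X ω)) 2 μ := fun i => hX.const_inner (b i)
  have hmean : ∀ i, inner ℝ (b i) μ[X] = ∫ ω, inner ℝ (b i) (X ω) ∂μ := fun i =>
    (integral_inner (hX.integrable one_le_two) (b i)).symm
  calc ∫ ω, ‖X ω - μ[X]‖ ^ 2 ∂μ
      = ∫ ω, ∑ i, (inner ℝ (b i) (X ω) - ∫ ω, inner ℝ (b i) (X ω) ∂μ) ^ 2 ∂μ := by
        simp_rw [← b.sum_sq_inner_right, inner_sub_right, hmean]
    _ = ∑ i, Var[fun ω => inner ℝ (b i) (X ω); μ] := by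
        simp_rw [variance_eq_integral (hXb _).aestronglyMeasurable.aemeasurable]
        exact integral_finsetSum _ fun i _ => ((hXb i).sub (memLp_const _)).integrable_sq
    _ ≤ ∑ _i, c := Finset.sum_le_sum fun i _ => hvar (b i) (b.norm_eq_one i)
    _ = Module.finrank ℝ E * c := by simp

end SecondMoment

section Hessian

lemma strongConvexOn_univ_of_hasDerivAt2 {g g' g'' : ℝ → ℝ} {m : ℝ}
    (hg : ∀ r, HasDerivAt g (g' r) r) (hg' : ∀ r, HasDerivAt g' (g'' r) r)
    (hm : ∀ r, m ≤ g'' r) : StrongConvexOn univ m g := by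
  have hderiv : ∀ r, HasDerivAt (fun r => g r - m / 2 * ‖r‖ ^ 2) (g' r - m * r) r := by
    intro r
    simp only [Real.norm_eq_abs, sq_abs]
    exact ((hg r).sub ((hasDerivAt_pow 2 r).const_mul (m / 2))).congr_deriv (by simp; ring)
  have hderiv2 : ∀ r, HasDerivAt (fun r => g' r - m * r) (g'' r - m) r := fun r =>
    ((hg' r).sub ((hasDerivAt_id r).const_mul m)).congr_deriv (by simp)
  have hderiv_eq : deriv (fun r => g r - m / 2 * ‖r‖ ^ 2) = fun r => g' r - m * r :=
    funext fun r => (hderiv r).deriv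
  rw [strongConvexOn_iff_convex]
  refine convexOn_univ_of_deriv2_nonneg (fun r => (hderiv r).differentiableAt) ?_ fun r => ?_
  · rw [hderiv_eq]
    exact fun r => (hderiv2 r).differentiableAt
  · rw [Function.iterate_succ_apply, Function.iterate_one, hderiv_eq, (hderiv2 r).deriv]
    exact sub_nonneg.2 (hm r)

variable {E : Type*} [NormedAddCommGroup E] [NormedSpace ℝ E] {V : E → ℝ} {m : ℝ}

lemma strongConvexOn_univ_comp_line_of_iteratedFDeriv_two (hV : ContDiff ℝ 2 V) (x v : E)
    (hm : ∀ y, m ≤ iteratedFDeriv ℝ 2 V y ![v, v]) :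
    StrongConvexOn univ m fun r : ℝ => V (x + r • v) := by
  have hV' : Differentiable ℝ V := hV.differentiable two_ne_zero
  have hV'' : Differentiable ℝ (fderiv ℝ V) :=
    (hV.fderiv_right (m := 1) (by norm_num)).differentiable one_ne_zero
  have hline : ∀ r : ℝ, HasDerivAt (fun r : ℝ => x + r • v) v r := fun r => by
    simpa using ((hasDerivAt_id r).smul_const v).const_add x
  refine strongConvexOn_univ_of_hasDerivAt2 (g' := fun r => fderiv ℝ V (x + r • v) v)
    (g'' := fun r => fderiv ℝ (fderiv ℝ V) (x + r • v) v v)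
    (fun r => (hV' _).hasFDerivAt.comp_hasDerivAt r (hline r)) (fun r => ?_) fun r => ?_
  · exact (ContinuousLinearMap.apply ℝ ℝ v).hasFDerivAt.comp_hasDerivAt r
      ((hV'' _).hasFDerivAt.comp_hasDerivAt r (hline r))
  · simpa [iteratedFDeriv_two_apply] using hm (x + r • v)

theorem strongConvexOn_univ_of_iteratedFDeriv_two (hV : ContDiff ℝ 2 V)
    (hm : ∀ x v, m * ‖v‖ ^ 2 ≤ iteratedFDeriv ℝ 2 V x ![v, v]) : StrongConvexOn univ m V := by
  refine ⟨convex_univ, fun x _ y _ t s ht hs hts => ?_⟩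
  have hline := (strongConvexOn_univ_comp_line_of_iteratedFDeriv_two hV x (y - x)
    fun z => hm z (y - x)).2 (mem_univ 0) (mem_univ 1) ht hs hts
  have hcomb : x + s • (y - x) = t • x + s • y := by
    obtain rfl : t = 1 - s := eq_sub_of_add_eq hts
    module
  have hquad : m * ‖y - x‖ ^ 2 / 2 = m / 2 * ‖y - x‖ ^ 2 := by ring
  simpa [hcomb, hquad, norm_sub_rev x y] using hline

end Hessian

section Concentration

variable {E : Type*} [NormedAddCommGroup E] [InnerProductSpace ℝ E] [FiniteDimensional ℝ E]
  [MeasurableSpace E] [BorelSpace E] (ρ : Measure E) [ρ.IsAddHaarMeasure] {V : E → ℝ} {m : ℝ≥0}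

lemma memLp_id_tilted_neg_of_strongConvexOn (hm : 0 < m) (hV : StrongConvexOn univ m V) :
    MemLp (fun x => x) 2 (ρ.tilted fun x => -V x) := by
  have : IsProbabilityMeasure (ρ.tilted fun x => -V x) :=
    isProbabilityMeasure_tilted_neg_of_strongConvexOn ρ hm hV
  have hnorm := (hasSubgaussianMGF_of_strongConvexOn ρ hm hV lipschitzWith_one_norm).memLp 2
  refine (memLp_norm_iff aestronglyMeasurable_id).1 ?_
  exact (hnorm.add (memLp_const (∫ y, ‖y‖ ∂(ρ.tilted fun x => -V x)))).ae_eq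
    (.of_forall fun x => sub_add_cancel _ _)

lemma variance_inner_le_of_strongConvexOn (hm : 0 < m) (hV : StrongConvexOn univ m V) {u : E}
    (hu : ‖u‖ = 1) : Var[fun x => inner ℝ u x; ρ.tilted fun x => -V x] ≤ 1 / m := by
  have : IsProbabilityMeasure (ρ.tilted fun x => -V x) :=
    isProbabilityMeasure_tilted_neg_of_strongConvexOn ρ hm hV
  have hlip : LipschitzWith 1 fun x => inner ℝ u x := by
    refine LipschitzWith.of_dist_le_mul fun x y => ?_
    simpa [← inner_sub_right, dist_eq_norm, hu] using abs_real_inner_le_norm u (x - y)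
  have hvar := variance_le_of_hasSubgaussianMGF (hasSubgaussianMGF_of_strongConvexOn ρ hm hV hlip)
  rw [variance_sub_const (by fun_prop)] at hvar
  simpa using hvar

theorem integral_norm_sub_integral_le_of_strongConvexOn (hm : 0 < m)
    (hV : StrongConvexOn univ m V) :
    ∫ x, ‖x - ∫ y, y ∂(ρ.tilted fun x => -V x)‖ ∂(ρ.tilted fun x => -V x)
      ≤ √(Module.finrank ℝ E / m) := by
  have : IsProbabilityMeasure (ρ.tilted fun x => -V x) :=
    isProbabilityMeasure_tilted_neg_of_strongConvexOn ρ hm hV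
  have hmem := memLp_id_tilted_neg_of_strongConvexOn ρ hm hV
  refine (integral_le_sqrt_integral_sq (hmem.sub (memLp_const _)).norm).trans
    (Real.sqrt_le_sqrt ?_)
  simpa [div_eq_mul_inv] using integral_norm_sub_integral_sq_le hmem fun u hu =>
    variance_inner_le_of_strongConvexOn ρ hm hV hu

theorem strongly_logconcave_norm_concentration_general {α : ℝ} (hα : 0 < α)
    (hV : StrongConvexOn univ α V) {δ : ℝ} (hδ : δ ∈ Ioo (0 : ℝ) 1) :
    ENNReal.ofReal (1 - δ) ≤ (ρ.tilted fun x => -V x)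
      {x | ‖x - ∫ y, y ∂(ρ.tilted fun x => -V x)‖
        ≤ √(Module.finrank ℝ E / α) + √(2 * Real.log (1 / δ) / α)} := by
  lift α to ℝ≥0 using hα.le
  have : IsProbabilityMeasure (ρ.tilted fun x => -V x) :=
    isProbabilityMeasure_tilted_neg_of_strongConvexOn ρ hα hV
  have hlip : LipschitzWith 1 fun x => ‖x - ∫ y, y ∂(ρ.tilted fun x => -V x)‖ := by
    simpa only [dist_eq_norm] using LipschitzWith.dist_left (∫ y, y ∂(ρ.tilted fun x => -V x))
  refine (ofReal_one_sub_le_measure_of_hasSubgaussianMGF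
    (hasSubgaussianMGF_of_strongConvexOn ρ hα hV hlip) (by simpa using hα) hδ.1 hδ.2.le).trans
    (measure_mono fun x hx => ?_)
  have hmean := integral_norm_sub_integral_le_of_strongConvexOn ρ hα hV
  have hradius : 2 * ((1 ^ 2 / α : ℝ≥0) : ℝ) * Real.log (1 / δ) = 2 * Real.log (1 / δ) / α := by
    push_cast
    ring
  rw [mem_ofPred_eq, hradius] at hx
  exact (sub_le_iff_le_add'.1 hx).trans (by gcongr)

end Concentration

/-- Norm concentration for an `α`-strongly log-concave random vector:
if `X` has density `∝ exp(−V)` with `∇²V ⪰ α I_d` everywhere and mean `μ`, then for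
`δ ∈ (0,1)`, `P[‖X − μ‖ ≤ √(d/α) + √(2 ln(1/δ)/α)] ≥ 1 − δ`. -/
theorem strongly_logconcave_norm_concentration (d : ℕ) (α : ℝ) (hα : 0 < α)
    (V : EuclideanSpace ℝ (Fin d) → ℝ) (hV : ContDiff ℝ 2 V)
    (hhess : ∀ x v : EuclideanSpace ℝ (Fin d),
      α * ‖v‖ ^ 2 ≤ (iteratedFDeriv ℝ 2 V x) ![v, v])
    (π' : Measure (EuclideanSpace ℝ (Fin d)))
    (hπ' : π' = volume.withDensity fun x =>
      ENNReal.ofReal (Real.exp (-V x) / ∫ y, Real.exp (-V y)))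
    (μ : EuclideanSpace ℝ (Fin d)) (hμ : μ = ∫ x, x ∂π')
    (δ : ℝ) (hδ : δ ∈ Set.Ioo (0 : ℝ) 1) :
    ENNReal.ofReal (1 - δ) ≤
      π' {x | ‖x - μ‖ ≤ Real.sqrt (d / α) + Real.sqrt (2 * Real.log (1 / δ) / α)} := by
  obtain rfl : π' = volume.tilted fun x => -V x := hπ'
  subst hμ
  simpa using strongly_logconcave_norm_concentration_general volume hα
    (strongConvexOn_univ_of_iteratedFDeriv_two hV hhess) hδ
end

section
/- Let p be a probability distribution on ℝ^d with finite second moment, and set m₂² := E_{x∼p}‖x − E_{x∼p}[x]‖². Let x ~ p, let A ∈ ℝ^{m×d}, η₁ > 0, and y₁ = Ax + ξ with ξ ~ N(0, η₁² I_m) independent of x. Then E_{y₁}[ TV( law of x conditioned on y₁, p ) ] ≤ ‖A‖·m₂ / (2η₁), where ‖A‖ is the operator norm of A. -/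
open MeasureTheory ProbabilityTheory

/-- Total variation distance between two measures: supremum over measurable sets of the
absolute difference of their masses. -/
noncomputable def tvDist {α : Type*} [MeasurableSpace α] (μ ν : Measure α) : ℝ :=
  ⨆ S : {S : Set α // MeasurableSet S}, |(μ S.1).toReal - (ν S.1).toReal|

/-- The density of the isotropic Gaussian `N(0, σ² I_m)` on `ℝ^m`. -/
noncomputable def gaussDensity (m : ℕ) (σ2 : ℝ) (x : EuclideanSpace ℝ (Fin m)) : ℝ :=
  (2 * Real.pi * σ2) ^ (-(m : ℝ) / 2) * Real.exp (-‖x‖ ^ 2 / (2 * σ2))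

/-- The isotropic Gaussian measure `N(0, σ² I_m)` on `ℝ^m`. -/
noncomputable def gaussMeasure (m : ℕ) (σ2 : ℝ) : Measure (EuclideanSpace ℝ (Fin m)) :=
  volume.withDensity fun x => ENNReal.ofReal (gaussDensity m σ2 x)

/-!
By Pinsker's inequality on the joint space, the expected distance is at most
`√(KL(law(y, x) ‖ law(y) ⊗ law(x)) / 2)`. The chain rule for `KL` shows that replacing `law(y)` by
any other measure, here `N(c, η² I)`, can only increase the divergence. The two laws are then images
of `law(x) ⊗ N(0, η² I)` and of its shear `(a, z) ↦ (a, z - (F a - c))` under the same map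
`(a, z) ↦ (F a + z, a)`, so data processing reduces the bound to the divergence of a shear, which
the Cameron–Martin density evaluates as `E‖F x - c‖² / (2 η²)`.
-/

open InformationTheory
open scoped RealInnerProductSpace

section TotalVariation

variable {α : Type*} [MeasurableSpace α] {μ ν : Measure α}

lemma tvDist_nonneg (μ ν : Measure α) : 0 ≤ tvDist μ ν :=
  Real.iSup_nonneg fun _ ↦ abs_nonneg _

/-- The factor `1 / 2` arises because `S` and `Sᶜ` carry the same defect `|μ S - ν S|`. -/
lemma tvDist_le_integral_abs_rnDeriv_sub_one [IsProbabilityMeasure μ] [IsProbabilityMeasure ν]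
    (hμν : μ ≪ ν) :
    tvDist μ ν ≤ (∫ x, |(μ.rnDeriv ν x).toReal - 1| ∂ν) / 2 := by
  have hint : Integrable (fun x ↦ (μ.rnDeriv ν x).toReal - 1) ν :=
    Measure.integrable_toReal_rnDeriv.sub (integrable_const 1)
  have hset (s : Set α) :
      |μ.real s - ν.real s| ≤ ∫ x in s, |(μ.rnDeriv ν x).toReal - 1| ∂ν := by
    calc |μ.real s - ν.real s|
      _ = |∫ x in s, ((μ.rnDeriv ν x).toReal - 1) ∂ν| := by
        rw [integral_sub Measure.integrable_toReal_rnDeriv.integrableOn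
          (integrable_const 1).integrableOn, Measure.setIntegral_toReal_rnDeriv hμν,
          setIntegral_const, smul_eq_mul, mul_one]
      _ ≤ _ := abs_integral_le_integral_abs
  have : Nonempty {S : Set α // MeasurableSet S} := ⟨⟨∅, .empty⟩⟩
  refine ciSup_le fun ⟨s, hs⟩ ↦ ?_
  have hcompl : |μ.real sᶜ - ν.real sᶜ| = |μ.real s - ν.real s| := by
    rw [probReal_compl_eq_one_sub hs, probReal_compl_eq_one_sub hs, sub_sub_sub_cancel_left,
      abs_sub_comm]
  have hsplit := integral_add_compl hs hint.abs
  change |μ.real s - ν.real s| ≤ _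
  linarith [hset s, hset sᶜ]

end TotalVariation

section Pinsker

lemma hasDerivAt_mul_klFun_sub_sq {t : ℝ} (ht : t ≠ 0) :
    HasDerivAt (fun t : ℝ ↦ (2 * t + 4) * klFun t - 3 * (t - 1) ^ 2)
      (2 * klFun t + (2 * t + 4) * Real.log t - 6 * (t - 1)) t := by
  refine (((((hasDerivAt_id' t).const_mul 2).add_const 4).mul (hasDerivAt_klFun ht)).sub
    ((((hasDerivAt_id' t).sub_const 1).pow 2).const_mul 3)).congr_deriv ?_
  ring

/-- The weight `2 * t + 4` is the linear one for which the terms of order at most three at `t = 1`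
cancel. -/
lemma convexOn_mul_klFun_sub_sq :
    ConvexOn ℝ (Set.Ici 0) fun t : ℝ ↦ (2 * t + 4) * klFun t - 3 * (t - 1) ^ 2 := by
  have hderiv₂ {t : ℝ} (ht : t ≠ 0) :
      HasDerivAt (fun t : ℝ ↦ 2 * klFun t + (2 * t + 4) * Real.log t - 6 * (t - 1))
        (4 * (Real.log t - (1 - t⁻¹))) t := by
    refine ((((hasDerivAt_klFun ht).const_mul 2).add
      ((((hasDerivAt_id' t).const_mul 2).add_const 4).mul (Real.hasDerivAt_log ht))).sub
        (((hasDerivAt_id' t).sub_const 1).const_mul 6)).congr_deriv ?_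
    field_simp
    ring
  have hcont : Continuous fun t : ℝ ↦ (2 * t + 4) * klFun t - 3 * (t - 1) ^ 2 := by fun_prop
  refine convexOn_of_hasDerivWithinAt2_nonneg (convex_Ici 0) hcont.continuousOn
    (fun t ht ↦ (hasDerivAt_mul_klFun_sub_sq ?_).hasDerivWithinAt)
    (fun t ht ↦ (hderiv₂ ?_).hasDerivWithinAt)
    fun t ht ↦ mul_nonneg zero_le_four (sub_nonneg.2 (Real.one_sub_inv_le_log_of_pos ?_))
  all_goals rw [interior_Ici] at ht
  exacts [ht.ne', ht.ne', ht]

lemma three_mul_sub_one_sq_le_mul_klFun {t : ℝ} (ht : 0 ≤ t) :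
    3 * (t - 1) ^ 2 ≤ (2 * t + 4) * klFun t := by
  have hderiv_one :
      derivWithin (fun t : ℝ ↦ (2 * t + 4) * klFun t - 3 * (t - 1) ^ 2) (Set.Ioi 1) 1 = 0 := by
    rw [(hasDerivAt_mul_klFun_sub_sq one_ne_zero).hasDerivWithinAt.derivWithin
      (uniqueDiffWithinAt_Ioi 1)]
    simp [klFun_one]
  simpa [klFun_one] using
    convexOn_mul_klFun_sub_sq.isMinOn_of_rightDeriv_eq_zero (by simp) hderiv_one ht

lemma abs_sub_one_le_sqrt_mul_sqrt_klFun {t : ℝ} (ht : 0 ≤ t) :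
    |t - 1| ≤ √((2 * t + 4) / 3) * √(klFun t) := by
  rw [← Real.sqrt_mul (by positivity)]
  apply Real.abs_le_sqrt
  linarith [three_mul_sub_one_sq_le_mul_klFun ht]

variable {α : Type*} [MeasurableSpace α] {μ ν : Measure α}

lemma memLp_two_sqrt {f : α → ℝ} (hf : Integrable f μ) (hf₀ : 0 ≤ f) :
    MemLp (fun x ↦ √(f x)) 2 μ := by
  rw [memLp_two_iff_integrable_sq hf.aemeasurable.sqrt.aestronglyMeasurable]
  simpa only [Real.sq_sqrt (hf₀ _)] using hf

lemma integral_sqrt_mul_sqrt_le {f g : α → ℝ} (hf : Integrable f μ) (hg : Integrable g μ)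
    (hf₀ : 0 ≤ f) (hg₀ : 0 ≤ g) :
    ∫ x, √(f x) * √(g x) ∂μ ≤ √(∫ x, f x ∂μ) * √(∫ x, g x ∂μ) := by
  have hCS := integral_mul_le_Lp_mul_Lq_of_nonneg (μ := μ) Real.HolderConjugate.two_two
    (.of_forall fun x ↦ Real.sqrt_nonneg (f x)) (.of_forall fun x ↦ Real.sqrt_nonneg (g x))
    (by simpa using memLp_two_sqrt hf hf₀) (by simpa using memLp_two_sqrt hg hg₀)
  simpa only [Real.rpow_two, Real.sq_sqrt (hf₀ _), Real.sq_sqrt (hg₀ _), ← Real.sqrt_eq_rpow]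
    using hCS

theorem integral_abs_rnDeriv_sub_one_le_sqrt_klDiv [IsProbabilityMeasure μ]
    [IsProbabilityMeasure ν] (h : klDiv μ ν ≠ ⊤) :
    ∫ x, |(μ.rnDeriv ν x).toReal - 1| ∂ν ≤ √(2 * (klDiv μ ν).toReal) := by
  obtain ⟨hμν, hllr⟩ := klDiv_ne_top_iff.1 h
  have hkl : Integrable (fun x ↦ klFun (μ.rnDeriv ν x).toReal) ν :=
    (integrable_klFun_rnDeriv_iff hμν).2 hllr
  have hlin : Integrable (fun x ↦ (2 * (μ.rnDeriv ν x).toReal + 4) / 3) ν :=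
    ((Measure.integrable_toReal_rnDeriv.const_mul 2).add (integrable_const 4)).div_const 3
  have hlin_eq : ∫ x, (2 * (μ.rnDeriv ν x).toReal + 4) / 3 ∂ν = 2 := by
    rw [integral_div, integral_add (Measure.integrable_toReal_rnDeriv.const_mul 2)
      (integrable_const 4), integral_const_mul, Measure.integral_toReal_rnDeriv hμν]
    norm_num
  have hlin_nonneg (x : α) : 0 ≤ (2 * (μ.rnDeriv ν x).toReal + 4) / 3 := by positivity
  have hkl_nonneg (x : α) : 0 ≤ klFun (μ.rnDeriv ν x).toReal := klFun_nonneg ENNReal.toReal_nonneg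
  calc ∫ x, |(μ.rnDeriv ν x).toReal - 1| ∂ν
    _ ≤ ∫ x, √((2 * (μ.rnDeriv ν x).toReal + 4) / 3) * √(klFun (μ.rnDeriv ν x).toReal) ∂ν :=
      integral_mono_of_nonneg (.of_forall fun _ ↦ abs_nonneg _)
        ((memLp_two_sqrt hlin hlin_nonneg).integrable_mul (memLp_two_sqrt hkl hkl_nonneg))
        (.of_forall fun _ ↦ abs_sub_one_le_sqrt_mul_sqrt_klFun ENNReal.toReal_nonneg)
    _ ≤ √2 * √(klDiv μ ν).toReal := by
      simpa only [hlin_eq, toReal_klDiv_eq_integral_klFun hμν] using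
        integral_sqrt_mul_sqrt_le hlin hkl hlin_nonneg hkl_nonneg
    _ = √(2 * (klDiv μ ν).toReal) := (Real.sqrt_mul zero_le_two _).symm

end Pinsker

section ConditionalPinsker

variable {α β : Type*} [MeasurableSpace α] [MeasurableSpace β]
  [MeasurableSpace.CountableOrCountablyGenerated α β] {μ ν : Measure α} {κ η : Kernel α β}

lemma ae_rnDeriv_compProd_eq_rnDeriv_apply [IsFiniteMeasure μ] [IsFiniteKernel κ]
    [IsFiniteKernel η] (h : μ ⊗ₘ κ ≪ μ ⊗ₘ η) :
    ∀ᵐ a ∂μ, (fun b ↦ (μ ⊗ₘ κ).rnDeriv (μ ⊗ₘ η) (a, b)) =ᵐ[η a] (κ a).rnDeriv (η a) := by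
  have hκ : κ =ᵐ[μ] η.withDensity (κ.rnDeriv η) := by
    filter_upwards [h.kernel_of_compProd] with a ha
    exact (Kernel.withDensity_rnDeriv_eq ha).symm
  have hdens : μ ⊗ₘ κ = (μ ⊗ₘ η).withDensity fun p ↦ κ.rnDeriv η p.1 p.2 := by
    rw [Measure.compProd_congr hκ, Measure.compProd_withDensity (Kernel.measurable_rnDeriv κ η)]
  have hrn : (μ ⊗ₘ κ).rnDeriv (μ ⊗ₘ η) =ᵐ[μ ⊗ₘ η] fun p ↦ κ.rnDeriv η p.1 p.2 := by
    rw [hdens]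
    exact Measure.rnDeriv_withDensity _ (Kernel.measurable_rnDeriv κ η)
  filter_upwards [Measure.ae_ae_of_ae_compProd hrn] with a ha
  exact Filter.EventuallyEq.trans ha Kernel.rnDeriv_eq_rnDeriv_measure

theorem integral_tvDist_le_sqrt_klDiv_compProd {Ω : Type*} {mΩ : MeasurableSpace Ω}
    {P : Measure Ω} [IsProbabilityMeasure P] {Y : Ω → α} (hY : AEMeasurable Y P)
    [IsMarkovKernel κ] [IsMarkovKernel η] (h : klDiv (P.map Y ⊗ₘ κ) (P.map Y ⊗ₘ η) ≠ ⊤) :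
    ∫ ω, tvDist (κ (Y ω)) (η (Y ω)) ∂P ≤
      √((klDiv (P.map Y ⊗ₘ κ) (P.map Y ⊗ₘ η)).toReal / 2) := by
  have := Measure.isProbabilityMeasure_map hY
  set μ := P.map Y
  have hac : μ ⊗ₘ κ ≪ μ ⊗ₘ η := (klDiv_ne_top_iff.1 h).1
  have hint : Integrable (fun p ↦ |((μ ⊗ₘ κ).rnDeriv (μ ⊗ₘ η) p).toReal - 1|) (μ ⊗ₘ η) :=
    (Measure.integrable_toReal_rnDeriv.sub (integrable_const 1)).abs
  have hfib : Integrable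
      (fun a ↦ (∫ b, |((μ ⊗ₘ κ).rnDeriv (μ ⊗ₘ η) (a, b)).toReal - 1| ∂η a) / 2) μ :=
    (Integrable.integral_compProd hint).div_const 2
  have htv : ∀ᵐ a ∂μ, tvDist (κ a) (η a) ≤
      (∫ b, |((μ ⊗ₘ κ).rnDeriv (μ ⊗ₘ η) (a, b)).toReal - 1| ∂η a) / 2 := by
    filter_upwards [hac.kernel_of_compProd, ae_rnDeriv_compProd_eq_rnDeriv_apply hac] with a ha hrn
    refine (tvDist_le_integral_abs_rnDeriv_sub_one ha).trans_eq ?_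
    congr 1
    refine integral_congr_ae ?_
    filter_upwards [hrn] with b hb
    rw [hb]
  calc ∫ ω, tvDist (κ (Y ω)) (η (Y ω)) ∂P
    _ ≤ ∫ ω, (∫ b, |((μ ⊗ₘ κ).rnDeriv (μ ⊗ₘ η) (Y ω, b)).toReal - 1| ∂η (Y ω)) / 2 ∂P :=
      integral_mono_of_nonneg (.of_forall fun _ ↦ tvDist_nonneg _ _) (hfib.comp_aemeasurable hY)
        (ae_of_ae_map hY htv)
    _ = ∫ a, (∫ b, |((μ ⊗ₘ κ).rnDeriv (μ ⊗ₘ η) (a, b)).toReal - 1| ∂η a) / 2 ∂μ :=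
      (integral_map hY hfib.aestronglyMeasurable).symm
    _ = (∫ p, |((μ ⊗ₘ κ).rnDeriv (μ ⊗ₘ η) p).toReal - 1| ∂(μ ⊗ₘ η)) / 2 := by
      rw [integral_div, Measure.integral_compProd hint]
    _ ≤ √(2 * (klDiv (μ ⊗ₘ κ) (μ ⊗ₘ η)).toReal) / 2 := by
      gcongr
      exact integral_abs_rnDeriv_sub_one_le_sqrt_klDiv h
    _ = √((klDiv (μ ⊗ₘ κ) (μ ⊗ₘ η)).toReal / 2) := by
      rw [eq_comm, Real.sqrt_eq_iff_eq_sq (by positivity) (by positivity), div_pow,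
        Real.sq_sqrt (by positivity)]
      ring

end ConditionalPinsker

lemma klDiv_compProd_le {α β : Type*} [MeasurableSpace α] [MeasurableSpace β] (μ ν : Measure α)
    (κ η : Kernel α β) [IsFiniteMeasure μ] [IsFiniteMeasure ν] [IsMarkovKernel κ]
    [IsMarkovKernel η] :
    klDiv (μ ⊗ₘ κ) (μ ⊗ₘ η) ≤ klDiv (μ ⊗ₘ κ) (ν ⊗ₘ η) := by
  rw [klDiv_compProd_eq_add μ ν]
  exact le_add_self

section Gaussian

open scoped Matrix
variable {m : ℕ} {s : ℝ}

lemma gaussDensity_pos (hs : 0 < s) (z : EuclideanSpace ℝ (Fin m)) : 0 < gaussDensity m s z := by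
  unfold gaussDensity; positivity

lemma continuous_gaussDensity (m : ℕ) (s : ℝ) : Continuous (gaussDensity m s) := by
  unfold gaussDensity; fun_prop

lemma integrable_gaussDensity (m : ℕ) (hs : 0 < s) : Integrable (gaussDensity m s) := by
  refine Integrable.const_mul (Integrable.of_integral_ne_zero ?_) _
  have hform (z : EuclideanSpace ℝ (Fin m)) :
      Real.exp (-‖z‖ ^ 2 / (2 * s)) = Real.exp (-(2 * s)⁻¹ * ‖z‖ ^ 2) := by
    congr 1; ring
  simp_rw [hform]
  rw [GaussianFourier.integral_rexp_neg_mul_sq_norm (by positivity)]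
  positivity

lemma two_pi_mul_rpow_mul_cpow_eq_one (m : ℕ) (hs : 0 < s) :
    (((2 * Real.pi * s) ^ (-(m : ℝ) / 2) : ℝ) : ℂ) *
      (Real.pi / (2 * s : ℂ)⁻¹) ^ ((m : ℂ) / 2) = 1 := by
  have hpos : 0 < 2 * Real.pi * s := by positivity
  have hbase : Real.pi / (2 * s : ℂ)⁻¹ = ((2 * Real.pi * s : ℝ) : ℂ) := by push_cast; field_simp
  rw [hbase, Complex.ofReal_cpow hpos.le,
    ← Complex.cpow_add _ _ (Complex.ofReal_ne_zero.2 hpos.ne')]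
  simp [neg_div]

lemma charFun_gaussMeasure (hs : 0 < s) (t : EuclideanSpace ℝ (Fin m)) :
    charFun (gaussMeasure m s) t = Complex.exp (-(s * ‖t‖ ^ 2 / 2)) := by
  have hre : 0 < ((2 * s : ℂ)⁻¹).re := by
    rw [← Complex.ofReal_ofNat, ← Complex.ofReal_mul, ← Complex.ofReal_inv, Complex.ofReal_re]
    positivity
  calc charFun (gaussMeasure m s) t
    _ = ∫ z, (gaussDensity m s z : ℂ) * Complex.exp (⟪z, t⟫ * Complex.I) := by
      rw [charFun_apply, gaussMeasure, integral_withDensity_eq_integral_toReal_smul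
        (continuous_gaussDensity m s).measurable.ennreal_ofReal
        (.of_forall fun _ ↦ ENNReal.ofReal_lt_top)]
      simp_rw [ENNReal.toReal_ofReal (gaussDensity_pos hs _).le, Complex.real_smul]
    _ = ((2 * Real.pi * s) ^ (-(m : ℝ) / 2) : ℝ) *
        ∫ z : EuclideanSpace ℝ (Fin m),
          Complex.exp (-(2 * s : ℂ)⁻¹ * ‖z‖ ^ 2 + Complex.I * ⟪t, z⟫) := by
      rw [← integral_const_mul]
      refine integral_congr_ae (.of_forall fun z ↦ ?_)
      simp only [gaussDensity, Complex.ofReal_mul, Complex.ofReal_exp, mul_assoc,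
        ← Complex.exp_add, real_inner_comm z t]
      congr 2
      push_cast
      ring
    _ = Complex.exp (-(s * ‖t‖ ^ 2 / 2)) := by
      rw [GaussianFourier.integral_cexp_neg_mul_sq_norm_add hre, finrank_euclideanSpace_fin,
        ← mul_assoc, two_pi_mul_rpow_mul_cpow_eq_one m hs, one_mul, Complex.I_sq]
      congr 1
      field_simp
      ring

lemma gaussMeasure_eq_multivariateGaussian (m : ℕ) (hs : 0 < s) :
    gaussMeasure m s = multivariateGaussian 0 (s • 1) := by
  have : IsFiniteMeasure (gaussMeasure m s) :=
    isFiniteMeasure_withDensity_ofReal (integrable_gaussDensity m hs).2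
  refine Measure.ext_of_charFun (funext fun t ↦ ?_)
  have hquad : t.ofLp ⬝ᵥ (s • (1 : Matrix (Fin m) (Fin m) ℝ)) *ᵥ t.ofLp = s * ‖t‖ ^ 2 := by
    rw [Matrix.smul_mulVec, Matrix.one_mulVec, dotProduct_smul, EuclideanSpace.real_norm_sq_eq,
      smul_eq_mul]
    simp only [dotProduct, sq]
  rw [charFun_gaussMeasure hs, charFun_multivariateGaussian (Matrix.PosSemidef.one.smul hs.le),
    hquad]
  simp

lemma isProbabilityMeasure_gaussMeasure (m : ℕ) (hs : 0 < s) :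
    IsProbabilityMeasure (gaussMeasure m s) := by
  rw [gaussMeasure_eq_multivariateGaussian m hs]
  infer_instance

lemma integrable_id_gaussMeasure (m : ℕ) (hs : 0 < s) :
    Integrable (fun z ↦ z) (gaussMeasure m s) := by
  rw [gaussMeasure_eq_multivariateGaussian m hs]
  exact IsGaussian.integrable_fun_id

lemma integral_id_gaussMeasure (m : ℕ) (hs : 0 < s) : ∫ z, z ∂gaussMeasure m s = 0 := by
  rw [gaussMeasure_eq_multivariateGaussian m hs, integral_id_multivariateGaussian]

end Gaussian

section CameronMartin

variable {m : ℕ} {s : ℝ}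

lemma gaussDensity_add (s : ℝ) (z v : EuclideanSpace ℝ (Fin m)) :
    gaussDensity m s (z + v) =
      gaussDensity m s z * Real.exp (-(⟪z, v⟫ / s + ‖v‖ ^ 2 / (2 * s))) := by
  simp only [gaussDensity]
  rw [mul_assoc (_ ^ _), ← Real.exp_add, norm_add_sq_real]
  congr 2
  ring

theorem lintegral_gaussMeasure_comp_sub (hs : 0 < s) (v : EuclideanSpace ℝ (Fin m))
    {f : EuclideanSpace ℝ (Fin m) → ENNReal} (hf : Measurable f) :
    ∫⁻ z, f (z - v) ∂gaussMeasure m s =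
      ∫⁻ z, ENNReal.ofReal (Real.exp (-(⟪z, v⟫ / s + ‖v‖ ^ 2 / (2 * s)))) * f z
        ∂gaussMeasure m s := by
  have hdens : Measurable fun z ↦ ENNReal.ofReal (gaussDensity m s z) :=
    (continuous_gaussDensity m s).measurable.ennreal_ofReal
  calc ∫⁻ z, f (z - v) ∂gaussMeasure m s
    _ = ∫⁻ z, ENNReal.ofReal (gaussDensity m s z) * f (z - v) :=
      lintegral_withDensity_eq_lintegral_mul _ hdens (by fun_prop)
    _ = ∫⁻ z, ENNReal.ofReal (gaussDensity m s (z + v)) * f z := by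
      rw [← lintegral_add_right_eq_self _ v]
      simp only [add_sub_cancel_right]
    _ = ∫⁻ z, ENNReal.ofReal (gaussDensity m s z) *
        (ENNReal.ofReal (Real.exp (-(⟪z, v⟫ / s + ‖v‖ ^ 2 / (2 * s)))) * f z) := by
      simp only [gaussDensity_add, ENNReal.ofReal_mul (gaussDensity_pos hs _).le, mul_assoc]
    _ = _ := (lintegral_withDensity_eq_lintegral_mul _ hdens (by fun_prop)).symm

variable {X : Type*} [MeasurableSpace X] {P : Measure X}

lemma map_sub_prod_gaussMeasure (hs : 0 < s) {w : X → EuclideanSpace ℝ (Fin m)}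
    (hw : Measurable w) :
    (P.prod (gaussMeasure m s)).map (fun p ↦ (p.1, p.2 - w p.1)) =
      (P.prod (gaussMeasure m s)).withDensity fun p ↦
        ENNReal.ofReal (Real.exp (-(⟪p.2, w p.1⟫ / s + ‖w p.1‖ ^ 2 / (2 * s)))) := by
  have := isProbabilityMeasure_gaussMeasure m hs
  have hexp : Measurable fun p : X × EuclideanSpace ℝ (Fin m) ↦
      ENNReal.ofReal (Real.exp (-(⟪p.2, w p.1⟫ / s + ‖w p.1‖ ^ 2 / (2 * s)))) := by fun_prop
  refine Measure.ext_of_lintegral _ fun f hf ↦ ?_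
  rw [lintegral_map hf (by fun_prop), lintegral_withDensity_eq_lintegral_mul _ hexp hf,
    lintegral_prod (fun p ↦ f (p.1, p.2 - w p.1)) (by fun_prop),
    lintegral_prod _ (hexp.mul hf).aemeasurable]
  exact lintegral_congr fun a ↦
    lintegral_gaussMeasure_comp_sub hs (w a) (hf.comp measurable_prodMk_left)

lemma klDiv_withDensity_exp_neg {μ : Measure X} [IsProbabilityMeasure μ] {f : X → ℝ}
    (hf : Measurable f) (hint : Integrable f μ)
    [IsProbabilityMeasure (μ.withDensity fun x ↦ ENNReal.ofReal (Real.exp (-f x)))] :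
    klDiv μ (μ.withDensity fun x ↦ ENNReal.ofReal (Real.exp (-f x))) =
      ENNReal.ofReal (∫ x, f x ∂μ) := by
  have hdens : Measurable fun x ↦ ENNReal.ofReal (Real.exp (-f x)) := by fun_prop
  have hμν : μ ≪ μ.withDensity fun x ↦ ENNReal.ofReal (Real.exp (-f x)) :=
    withDensity_absolutelyContinuous' hdens.aemeasurable
      (.of_forall fun x ↦ (ENNReal.ofReal_pos.2 (Real.exp_pos _)).ne')
  have hllr : llr μ (μ.withDensity fun x ↦ ENNReal.ofReal (Real.exp (-f x))) =ᵐ[μ] f := by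
    filter_upwards [neg_llr hμν, Measure.rnDeriv_withDensity μ hdens] with x hneg hrn
    refine neg_injective (hneg.trans ?_)
    rw [llr, hrn, ENNReal.toReal_ofReal (Real.exp_nonneg _), Real.log_exp]
  rw [klDiv_of_ac_of_integrable hμν (hint.congr hllr.symm), integral_congr_ae hllr]
  simp

section InnerProd

variable {E : Type*} [NormedAddCommGroup E] [InnerProductSpace ℝ E] [MeasurableSpace E]
  {ν : Measure E} {w : X → E}

lemma integrable_inner_prod (hw : Integrable w P)
    (hν : Integrable (fun z ↦ z) ν) :
    Integrable (fun p : X × E ↦ ⟪p.2, w p.1⟫) (P.prod ν) :=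
  (hw.norm.mul_prod hν.norm).mono'
    (hν.aestronglyMeasurable.comp_snd.inner hw.aestronglyMeasurable.comp_fst)
    (.of_forall fun _ ↦ (norm_inner_le_norm _ _).trans_eq (mul_comm _ _))

lemma integral_inner_prod_eq_zero [CompleteSpace E] [SFinite P] [SFinite ν] (hw : Integrable w P)
    (hν : Integrable (fun z ↦ z) ν) (hν₀ : ∫ z, z ∂ν = 0) :
    ∫ p, ⟪p.2, w p.1⟫ ∂(P.prod ν) = 0 := by
  rw [integral_prod _ (integrable_inner_prod hw hν)]
  refine integral_eq_zero_of_ae (.of_forall fun a ↦ ?_)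
  simp_rw [real_inner_comm (w a), integral_inner hν, hν₀, inner_zero_right, Pi.zero_apply]

end InnerProd

theorem klDiv_map_sub_prod_gaussMeasure [IsProbabilityMeasure P] (hs : 0 < s)
    {w : X → EuclideanSpace ℝ (Fin m)} (hw : Measurable w)
    (hw₂ : Integrable (fun a ↦ ‖w a‖ ^ 2) P) :
    klDiv (P.prod (gaussMeasure m s))
        ((P.prod (gaussMeasure m s)).map fun p ↦ (p.1, p.2 - w p.1)) =
      ENNReal.ofReal ((∫ a, ‖w a‖ ^ 2 ∂P) / (2 * s)) := by
  have := isProbabilityMeasure_gaussMeasure m hs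
  have hw₁ : Integrable w P :=
    ((memLp_two_iff_integrable_sq_norm hw.aestronglyMeasurable).2 hw₂).integrable one_le_two
  have hinner : Integrable (fun p ↦ ⟪p.2, w p.1⟫ / s) (P.prod (gaussMeasure m s)) :=
    (integrable_inner_prod hw₁ (integrable_id_gaussMeasure m hs)).div_const s
  have hsq : Integrable (fun p ↦ ‖w p.1‖ ^ 2 / (2 * s)) (P.prod (gaussMeasure m s)) :=
    (hw₂.comp_fst _).div_const _
  have hmap := map_sub_prod_gaussMeasure (P := P) hs hw
  have : IsProbabilityMeasure ((P.prod (gaussMeasure m s)).withDensity fun p ↦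
      ENNReal.ofReal (Real.exp (-(⟪p.2, w p.1⟫ / s + ‖w p.1‖ ^ 2 / (2 * s))))) :=
    hmap ▸ Measure.isProbabilityMeasure_map (by fun_prop)
  rw [hmap, klDiv_withDensity_exp_neg
      (f := fun p : X × EuclideanSpace ℝ (Fin m) ↦ ⟪p.2, w p.1⟫ / s + ‖w p.1‖ ^ 2 / (2 * s))
    (by fun_prop) (hinner.add hsq), integral_add hinner hsq,
    integral_div, integral_inner_prod_eq_zero hw₁ (integrable_id_gaussMeasure m hs)
      (integral_id_gaussMeasure m hs), integral_div, integral_fun_fst (fun a ↦ ‖w a‖ ^ 2)]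
  simp

end CameronMartin

section GaussianChannel

variable {m : ℕ} {X Ω : Type*} [MeasurableSpace X]

lemma klDiv_map_add_prod_gaussMeasure_le {μ : Measure X} [IsProbabilityMeasure μ] {s : ℝ}
    (hs : 0 < s) {F : X → EuclideanSpace ℝ (Fin m)} (hF : Measurable F)
    (c : EuclideanSpace ℝ (Fin m)) (hF₂ : Integrable (fun a ↦ ‖F a - c‖ ^ 2) μ) :
    klDiv ((μ.prod (gaussMeasure m s)).map fun p ↦ (F p.1 + p.2, p.1))
        (((gaussMeasure m s).map (c + ·)).prod μ) ≤
      ENNReal.ofReal ((∫ a, ‖F a - c‖ ^ 2 ∂μ) / (2 * s)) := by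
  have := isProbabilityMeasure_gaussMeasure m hs
  have hshear : ((μ.prod (gaussMeasure m s)).map fun p ↦ (p.1, p.2 - (F p.1 - c))).map
      (fun p ↦ (F p.1 + p.2, p.1)) = ((gaussMeasure m s).map (c + ·)).prod μ := by
    conv_rhs => rw [← Measure.map_id (μ := μ)]
    rw [Measure.map_prod_map _ _ (by fun_prop) measurable_id, ← Measure.prod_swap,
      Measure.map_map (by fun_prop) measurable_swap, Measure.map_map (by fun_prop) (by fun_prop)]
    congr 1
    ext p : 1
    simp only [Function.comp_apply, Prod.swap, Prod.map, id_eq, Prod.mk.injEq, and_true]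
    abel
  rw [← klDiv_map_sub_prod_gaussMeasure hs (hF.sub_const c) hF₂, ← hshear]
  exact klDiv_map_le _ _ (by fun_prop)

variable [StandardBorelSpace X] [Nonempty X] [MeasurableSpace Ω] {P : Measure Ω}
  [IsProbabilityMeasure P]

lemma klDiv_compProd_condDistrib_le {β : Type*} [MeasurableSpace β] {x : Ω → X} {y : Ω → β}
    (hx : AEMeasurable x P) (ν : Measure β) [IsFiniteMeasure ν] :
    klDiv (Measure.map y P ⊗ₘ condDistrib x y P)
        (Measure.map y P ⊗ₘ Kernel.const β (Measure.map x P)) ≤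
      klDiv (Measure.map (fun ω ↦ (y ω, x ω)) P) (ν.prod (Measure.map x P)) := by
  have := Measure.isProbabilityMeasure_map hx
  rw [← compProd_map_condDistrib hx, ← Measure.compProd_const]
  exact klDiv_compProd_le _ _ _ _

theorem klDiv_posterior_prior_le {x : Ω → X} {ξ : Ω → EuclideanSpace ℝ (Fin m)}
    (hx : Measurable x) (hξ : Measurable ξ) {F : X → EuclideanSpace ℝ (Fin m)}
    (hF : Measurable F) {s : ℝ} (hs : 0 < s) (hξlaw : Measure.map ξ P = gaussMeasure m s)
    (hindep : IndepFun x ξ P) (c : EuclideanSpace ℝ (Fin m))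
    (hmom : Integrable (fun ω ↦ ‖F (x ω) - c‖ ^ 2) P)
    {y : Ω → EuclideanSpace ℝ (Fin m)} (hy : ∀ ω, y ω = F (x ω) + ξ ω) :
    klDiv (Measure.map y P ⊗ₘ condDistrib x y P)
        (Measure.map y P ⊗ₘ Kernel.const _ (Measure.map x P)) ≤
      ENNReal.ofReal ((∫ ω, ‖F (x ω) - c‖ ^ 2 ∂P) / (2 * s)) := by
  have := isProbabilityMeasure_gaussMeasure m hs
  have := Measure.isProbabilityMeasure_map (μ := P) hx.aemeasurable
  have hsq : AEStronglyMeasurable (fun a ↦ ‖F a - c‖ ^ 2) (Measure.map x P) := by fun_prop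
  have hlaw : Measure.map (fun ω ↦ (y ω, x ω)) P =
      ((Measure.map x P).prod (gaussMeasure m s)).map fun p ↦ (F p.1 + p.2, p.1) := by
    rw [← hξlaw, ← (indepFun_iff_map_prod_eq_prod_map_map hx.aemeasurable hξ.aemeasurable).1 hindep,
      Measure.map_map (by fun_prop) (by fun_prop), funext hy]
    rfl
  refine (klDiv_compProd_condDistrib_le hx.aemeasurable ((gaussMeasure m s).map (c + ·))).trans ?_
  rw [hlaw, ← integral_map hx.aemeasurable hsq]
  exact klDiv_map_add_prod_gaussMeasure_le hs hF c
    ((integrable_map_measure hsq hx.aemeasurable).2 hmom)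

theorem expected_tv_posterior_prior_le_general {x : Ω → X} {ξ : Ω → EuclideanSpace ℝ (Fin m)}
    (hx : Measurable x) (hξ : Measurable ξ) {F : X → EuclideanSpace ℝ (Fin m)}
    (hF : Measurable F) {η₁ : ℝ} (hη₁ : 0 < η₁)
    (hξlaw : Measure.map ξ P = gaussMeasure m (η₁ ^ 2)) (hindep : IndepFun x ξ P)
    (c : EuclideanSpace ℝ (Fin m)) (hmom : Integrable (fun ω ↦ ‖F (x ω) - c‖ ^ 2) P)
    {y₁ : Ω → EuclideanSpace ℝ (Fin m)} (hy₁ : ∀ ω, y₁ ω = F (x ω) + ξ ω) :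
    ∫ ω, tvDist ((condDistrib x y₁ P) (y₁ ω)) (Measure.map x P) ∂P ≤
      √(∫ ω, ‖F (x ω) - c‖ ^ 2 ∂P) / (2 * η₁) := by
  have hy : Measurable y₁ := by rw [funext hy₁]; fun_prop
  have := Measure.isProbabilityMeasure_map (μ := P) hx.aemeasurable
  have hkl := klDiv_posterior_prior_le hx hξ hF (by positivity) hξlaw hindep c hmom hy₁
  calc ∫ ω, tvDist ((condDistrib x y₁ P) (y₁ ω)) (Measure.map x P) ∂P
    _ ≤ √((klDiv (Measure.map y₁ P ⊗ₘ condDistrib x y₁ P)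
        (Measure.map y₁ P ⊗ₘ Kernel.const _ (Measure.map x P))).toReal / 2) :=
      integral_tvDist_le_sqrt_klDiv_compProd (η := Kernel.const _ (Measure.map x P)) hy.aemeasurable
        (hkl.trans_lt ENNReal.ofReal_lt_top).ne
    _ ≤ √((∫ ω, ‖F (x ω) - c‖ ^ 2 ∂P) / (2 * η₁ ^ 2) / 2) := by
      gcongr
      exact ENNReal.toReal_le_of_le_ofReal (by positivity) hkl
    _ = √(∫ ω, ‖F (x ω) - c‖ ^ 2 ∂P) / (2 * η₁) := by
      rw [div_div, show 2 * η₁ ^ 2 * 2 = (2 * η₁) ^ 2 by ring, Real.sqrt_div (by positivity),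
        Real.sqrt_sq (by positivity)]

end GaussianChannel

lemma sqrt_integral_sq_norm_comp_le {Ω E F : Type*} [MeasurableSpace Ω] {μ : Measure Ω}
    [NormedAddCommGroup E] [NormedSpace ℝ E] [NormedAddCommGroup F] [NormedSpace ℝ F]
    (A : E →L[ℝ] F) {f : Ω → E} (hf : Integrable (fun ω ↦ ‖f ω‖ ^ 2) μ) :
    √(∫ ω, ‖A (f ω)‖ ^ 2 ∂μ) ≤ ‖A‖ * √(∫ ω, ‖f ω‖ ^ 2 ∂μ) := by
  rw [← Real.sqrt_sq (norm_nonneg A), ← Real.sqrt_mul (by positivity), ← integral_const_mul]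
  refine Real.sqrt_le_sqrt (integral_mono_of_nonneg (.of_forall fun _ ↦ by positivity)
    (hf.const_mul _) (.of_forall fun ω ↦ ?_))
  change ‖A (f ω)‖ ^ 2 ≤ ‖A‖ ^ 2 * ‖f ω‖ ^ 2
  rw [← mul_pow]
  gcongr
  exact A.le_opNorm _

/-- If `x ~ p` has finite second moment with `m₂² = E‖x − E x‖²`, and
`y₁ = A x + ξ` with `ξ ~ N(0, η₁² I_m)` independent of `x`, then the expected total
variation between the posterior of `x` given `y₁` and the prior `p` is at most
`‖A‖ m₂ / (2η₁)`. -/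
theorem expected_tv_posterior_prior_le (d m : ℕ)
    {Ω : Type*} [MeasureSpace Ω] [IsProbabilityMeasure (ℙ : Measure Ω)]
    (x : Ω → EuclideanSpace ℝ (Fin d)) (ξ : Ω → EuclideanSpace ℝ (Fin m))
    (hx : Measurable x) (hξ : Measurable ξ)
    (A : EuclideanSpace ℝ (Fin d) →L[ℝ] EuclideanSpace ℝ (Fin m))
    (η₁ : ℝ) (hη₁ : 0 < η₁)
    (hξlaw : Measure.map ξ ℙ = gaussMeasure m (η₁ ^ 2))
    (hindep : IndepFun x ξ ℙ)
    (hmom : Integrable (fun ω => ‖x ω‖ ^ 2) ℙ)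
    (y₁ : Ω → EuclideanSpace ℝ (Fin m)) (hy₁ : ∀ ω, y₁ ω = A (x ω) + ξ ω)
    (m₂ : ℝ) (hm₂ : m₂ = Real.sqrt (∫ ω, ‖x ω - ∫ ω', x ω' ∂ℙ‖ ^ 2 ∂ℙ)) :
    (∫ ω, tvDist ((condDistrib x y₁ ℙ) (y₁ ω)) (Measure.map x ℙ) ∂ℙ) ≤
      ‖A‖ * m₂ / (2 * η₁) := by
  subst hm₂
  have hx₂ : MemLp x 2 ℙ := (memLp_two_iff_integrable_sq_norm hx.aestronglyMeasurable).2 hmom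
  have hcentred : MemLp (fun ω ↦ x ω - ∫ ω', x ω' ∂ℙ) 2 ℙ := hx₂.sub (memLp_const _)
  refine (expected_tv_posterior_prior_le_general hx hξ A.measurable hη₁ hξlaw hindep
    (A (∫ ω, x ω ∂ℙ)) ?_ hy₁).trans ?_
  · simpa only [Function.comp_def, map_sub] using
      (A.comp_memLp' hcentred).integrable_norm_pow two_ne_zero
  · gcongr
    simpa only [map_sub] using
      sqrt_integral_sq_norm_comp_le A (hcentred.integrable_norm_pow two_ne_zero)
end

section
/- Let w ∈ (0, 0.01) and let p be the density on ℝ² of the uniform distribution on the unit circle convolved with N(0, w² I₂), i.e., p(x) = (1/2π) ∫₀^{2π} (1/(2πw²)) exp( −‖x − (cos θ, sin θ)‖²/(2w²) ) dθ. Then for every x ∈ ℝ² with r = ‖x‖ > 0, the Hessian of log p satisfies: ∇² log p(x) ⪯ (1/(2w⁴) − 1/w²)·I₂ if 0 < r ≤ w²; ∇² log p(x) ⪯ (1/(w²·r) − 1/w²)·I₂ if w² < r ≤ 1; and ∇² log p(x) ⪯ 0 if r > 1. -/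
open Real

/-! Given a mixing variable `θ` with Gaussian noise of variance `w²` around `u(θ)`, the Hessian of
the log-density at `x` in the direction `v` is `Var ⟪u(θ), v⟫ / w⁴ - ‖v‖² / w²`, the variance being
taken under the posterior law of `θ` given `x`. For the circle this posterior is the von Mises
distribution with concentration `k = ‖x‖ / w²` centred at the direction of `x`. Among unit
directions the posterior variance is largest across the circle: this is Turán's inequality
`I₀ I₂ ≤ I₁²` for modified Bessel functions. The largest value `(1 - I₂/I₀) / 2 = I₁ / (k I₀)` is at
most `1/2` and at most `1/k`. -/

section

open MeasureTheory ProbabilityTheory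
open scoped RealInnerProductSpace

section ExponentialFamily

variable {Ω E F : Type*} [MeasurableSpace Ω] {μ : Measure Ω}
  [NormedAddCommGroup E] [NormedSpace ℝ E] [NormedAddCommGroup F] [NormedSpace ℝ F]
  {ℓ : Ω → E →L[ℝ] ℝ} {C : ℝ} {f : Ω → F}

theorem integrable_exp_smul (hℓ : AEStronglyMeasurable ℓ μ) (hC : ∀ᵐ ω ∂μ, ‖ℓ ω‖ ≤ C)
    (hf : Integrable f μ) (y : E) : Integrable (fun ω => exp (ℓ ω y) • f ω) μ := by
  have hmeas : AEStronglyMeasurable (fun ω => exp (ℓ ω y)) μ :=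
    continuous_exp.comp_aestronglyMeasurable
      ((ContinuousLinearMap.apply ℝ ℝ y).continuous.comp_aestronglyMeasurable hℓ)
  refine hf.bdd_smul (exp (C * ‖y‖)) hmeas (hC.mono fun ω hω => ?_)
  rw [norm_of_nonneg (exp_pos _).le]
  exact exp_le_exp.2 ((le_abs_self _).trans ((ℓ ω).le_of_opNorm_le hω y))

theorem integrable_smulRight (hℓ : AEStronglyMeasurable ℓ μ) (hC : ∀ᵐ ω ∂μ, ‖ℓ ω‖ ≤ C)
    (hf : Integrable f μ) : Integrable (fun ω => (ℓ ω).smulRight (f ω)) μ := by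
  refine (hf.norm.const_mul C).mono'
    ((ContinuousLinearMap.smulRightL ℝ E F).aestronglyMeasurable_comp₂ hℓ hf.1)
    (hC.mono fun ω hω => ?_)
  rw [ContinuousLinearMap.norm_smulRight_apply]
  gcongr

theorem hasFDerivAt_integral_exp_smul (hℓ : AEStronglyMeasurable ℓ μ)
    (hC : ∀ᵐ ω ∂μ, ‖ℓ ω‖ ≤ C) (hf : Integrable f μ) (y : E) :
    HasFDerivAt (fun z => ∫ ω, exp (ℓ ω z) • f ω ∂μ)
      (∫ ω, exp (ℓ ω y) • (ℓ ω).smulRight (f ω) ∂μ) y := by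
  refine hasFDerivAt_integral_of_dominated_of_fderiv_le
    (F' := fun z ω => exp (ℓ ω z) • (ℓ ω).smulRight (f ω))
    (bound := fun ω => exp (C * (‖y‖ + 1)) * ‖(ℓ ω).smulRight (f ω)‖)
    (Metric.ball_mem_nhds y one_pos)
    (.of_forall fun z => (integrable_exp_smul hℓ hC hf z).1)
    (integrable_exp_smul hℓ hC hf y)
    (integrable_exp_smul hℓ hC (integrable_smulRight hℓ hC hf) y).1
    (hC.mono fun ω hω z hz => ?_)
    ((integrable_smulRight hℓ hC hf).norm.const_mul _)
    (.of_forall fun ω z _ => ?_)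
  · have hz' : ‖z‖ ≤ ‖y‖ + 1 := norm_le_norm_add_const_of_dist_le (Metric.mem_ball.1 hz).le
    have hC0 : 0 ≤ C := (norm_nonneg _).trans hω
    rw [norm_smul, norm_of_nonneg (exp_pos _).le]
    gcongr
    calc ℓ ω z ≤ ‖ℓ ω z‖ := le_abs_self _
      _ ≤ C * ‖z‖ := (ℓ ω).le_of_opNorm_le hω z
      _ ≤ C * (‖y‖ + 1) := by gcongr
  · refine ((ℓ ω).hasFDerivAt.exp.smul_const (f ω)).congr_fderiv ?_
    ext v
    simp [mul_smul]

theorem hasDerivAt_integral_exp_mul {X g : Ω → ℝ} (hX : AEStronglyMeasurable X μ)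
    (hC : ∀ᵐ ω ∂μ, ‖X ω‖ ≤ C) (hg : Integrable g μ) (t : ℝ) :
    HasDerivAt (fun s => ∫ ω, exp (s * X ω) * g ω ∂μ)
      (∫ ω, exp (t * X ω) * (X ω * g ω) ∂μ) t := by
  let m (ω : Ω) : ℝ →L[ℝ] ℝ := ContinuousLinearMap.toSpanSingleton ℝ (X ω)
  have hm : AEStronglyMeasurable m μ :=
    ContinuousLinearMap.toSpanSingletonCLE (𝕜 := ℝ) (E := ℝ)
      |>.continuous.comp_aestronglyMeasurable hX
  have hmC : ∀ᵐ ω ∂μ, ‖m ω‖ ≤ C := by simpa [m] using hC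
  have h := (hasFDerivAt_integral_exp_smul hm hmC hg t).hasDerivAt
  rw [ContinuousLinearMap.integral_apply (integrable_exp_smul hm hmC
    (integrable_smulRight hm hmC hg) t)] at h
  simpa [m] using h

theorem integral_tilted_eq_inv_smul (h : Ω → ℝ) (f : Ω → F) :
    ∫ ω, f ω ∂(μ.tilted h) = (∫ ω, exp (h ω) ∂μ)⁻¹ • ∫ ω, exp (h ω) • f ω ∂μ := by
  simp_rw [integral_tilted, div_eq_inv_mul, mul_smul]
  exact integral_smul _ _

theorem tilted_add_const [NeZero μ] {h : Ω → ℝ} (hh : Integrable (fun ω => exp (h ω)) μ) (c : ℝ) :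
    (μ.tilted fun ω => h ω + c) = μ.tilted h := by
  have := isProbabilityMeasure_tilted hh
  exact (tilted_tilted hh fun _ => c).symm.trans (tilted_const _ c)

variable [IsFiniteMeasure μ]

theorem integrable_exp_clm_apply (hℓ : AEStronglyMeasurable ℓ μ) (hC : ∀ᵐ ω ∂μ, ‖ℓ ω‖ ≤ C)
    (y : E) : Integrable (fun ω => exp (ℓ ω y)) μ := by
  simpa using integrable_exp_smul hℓ hC (integrable_const (1 : ℝ)) y

theorem hasFDerivAt_integral_exp (hℓ : AEStronglyMeasurable ℓ μ) (hC : ∀ᵐ ω ∂μ, ‖ℓ ω‖ ≤ C)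
    (y : E) :
    HasFDerivAt (fun z => ∫ ω, exp (ℓ ω z) ∂μ) (∫ ω, exp (ℓ ω y) • ℓ ω ∂μ) y := by
  have hone (m : E →L[ℝ] ℝ) : m.smulRight (1 : ℝ) = m := by ext; simp
  simpa [hone] using hasFDerivAt_integral_exp_smul hℓ hC (integrable_const (1 : ℝ)) y

variable [NeZero μ]

theorem hasFDerivAt_log_integral_exp (hℓ : AEStronglyMeasurable ℓ μ)
    (hC : ∀ᵐ ω ∂μ, ‖ℓ ω‖ ≤ C) (y : E) :
    HasFDerivAt (fun z => log (∫ ω, exp (ℓ ω z) ∂μ)) (∫ ω, ℓ ω ∂(μ.tilted fun ω => ℓ ω y)) y := by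
  rw [integral_tilted_eq_inv_smul]
  exact (hasFDerivAt_integral_exp hℓ hC y).log
    (integral_exp_pos (integrable_exp_clm_apply hℓ hC y)).ne'

theorem hasFDerivAt_integral_tilted (hℓ : AEStronglyMeasurable ℓ μ)
    (hC : ∀ᵐ ω ∂μ, ‖ℓ ω‖ ≤ C) (hf : Integrable f μ) (y : E) :
    HasFDerivAt (fun z => ∫ ω, f ω ∂(μ.tilted fun ω => ℓ ω z))
      (∫ ω, (ℓ ω).smulRight (f ω) ∂(μ.tilted fun ω => ℓ ω y) -
        (∫ ω, ℓ ω ∂(μ.tilted fun ω => ℓ ω y)).smulRight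
          (∫ ω, f ω ∂(μ.tilted fun ω => ℓ ω y))) y := by
  have hZ := (integral_exp_pos (integrable_exp_clm_apply hℓ hC y)).ne'
  simp_rw [integral_tilted_eq_inv_smul]
  refine (((hasDerivAt_inv hZ).comp_hasFDerivAt y (hasFDerivAt_integral_exp hℓ hC y)).smul
    (hasFDerivAt_integral_exp_smul hℓ hC hf y)).congr_fderiv ?_
  ext v
  simp only [_root_.add_apply, sub_apply, _root_.smul_apply, ContinuousLinearMap.smulRight_apply,
    Function.comp_apply, smul_eq_mul]
  module

theorem fderiv_integral_tilted_apply_self (hℓ : AEStronglyMeasurable ℓ μ)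
    (hC : ∀ᵐ ω ∂μ, ‖ℓ ω‖ ≤ C) (y v : E) :
    fderiv ℝ (fun z => ∫ ω, ℓ ω ∂(μ.tilted fun ω => ℓ ω z)) y v v =
      Var[fun ω => ℓ ω v; μ.tilted fun ω => ℓ ω y] := by
  have hint : Integrable ℓ μ := .of_bound hℓ C hC
  have hexp := integrable_exp_clm_apply hℓ hC y
  have := isProbabilityMeasure_tilted hexp
  have hac := tilted_absolutelyContinuous μ fun ω => ℓ ω y
  have hℓ' := hℓ.mono_ac hac
  have hC' : ∀ᵐ ω ∂(μ.tilted fun ω => ℓ ω y), ‖ℓ ω‖ ≤ C := hac.ae_le hC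
  have hint' : Integrable ℓ (μ.tilted fun ω => ℓ ω y) := .of_bound hℓ' C hC'
  have hint₂ := integrable_smulRight hℓ' hC' hint'
  have hLp : MemLp (fun ω => ℓ ω v) 2 (μ.tilted fun ω => ℓ ω y) :=
    .of_bound (hint'.apply_continuousLinearMap v).1 (C * ‖v‖)
      (hC'.mono fun ω hω => (ℓ ω).le_of_opNorm_le hω v)
  rw [(hasFDerivAt_integral_tilted hℓ hC hint y).fderiv, variance_eq_sub hLp, sub_apply, sub_apply]
  rw [ContinuousLinearMap.integral_apply hint₂,
    ContinuousLinearMap.integral_apply (hint₂.apply_continuousLinearMap v)]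
  simp [ContinuousLinearMap.integral_apply hint', pow_two]

end ExponentialFamily

section GaussianMixture

variable {Ω E : Type*} [MeasurableSpace Ω] {μ : Measure Ω} [IsFiniteMeasure μ]
  [NormedAddCommGroup E]

theorem integrable_exp_neg_norm_sub_sq_div {u : Ω → E} (hu : AEStronglyMeasurable u μ) (x : E)
    (w : ℝ) : Integrable (fun ω => exp (-‖x - u ω‖ ^ 2 / (2 * w ^ 2))) μ := by
  have hcont : Continuous fun a : E => exp (-‖x - a‖ ^ 2 / (2 * w ^ 2)) := by fun_prop
  refine .of_bound (C := 1) (hcont.comp_aestronglyMeasurable hu) (.of_forall fun ω => ?_)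
  rw [norm_of_nonneg (exp_pos _).le, exp_le_one_iff, neg_div]
  exact neg_nonpos.2 (by positivity)

theorem integrable_exp_neg_norm_sq_div {u : Ω → E} (hu : AEStronglyMeasurable u μ) (w : ℝ) :
    Integrable (fun ω => exp (-‖u ω‖ ^ 2 / (2 * w ^ 2))) μ := by
  simpa using integrable_exp_neg_norm_sub_sq_div hu 0 w

variable [InnerProductSpace ℝ E] {u : Ω → E} {R w : ℝ}

theorem integrable_exp_inner_div (hu : AEStronglyMeasurable u μ)
    (hR : ∀ᵐ ω ∂μ, ‖u ω‖ ≤ R) (x : E) (s : ℝ) : Integrable (fun ω => exp (⟪u ω, x⟫ / s)) μ := by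
  have hcont : Continuous fun a : E => exp (⟪a, x⟫ / s) := by fun_prop
  refine .of_bound (C := exp (R * ‖x‖ / |s|)) (hcont.comp_aestronglyMeasurable hu) ?_
  filter_upwards [hR] with ω hω
  rw [norm_of_nonneg (exp_pos _).le, exp_le_exp]
  refine (le_abs_self _).trans ?_
  rw [abs_div]
  gcongr
  exact (abs_real_inner_le_norm _ _).trans (by gcongr)

theorem neg_norm_sub_sq_div (hw : w ≠ 0) (x a : E) :
    -‖x - a‖ ^ 2 / (2 * w ^ 2) =
      -‖a‖ ^ 2 / (2 * w ^ 2) + ⟪a, x⟫ / w ^ 2 + -‖x‖ ^ 2 / (2 * w ^ 2) := by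
  rw [norm_sub_sq_real, real_inner_comm]
  field_simp
  ring

variable [NeZero μ]

theorem iteratedFDeriv_two_log_integral_exp_sub_norm_sq {ℓ : Ω → E →L[ℝ] ℝ}
    (hℓ : AEStronglyMeasurable ℓ μ) (hR : ∀ᵐ ω ∂μ, ‖ℓ ω‖ ≤ R) (a b : ℝ) (x v : E) :
    iteratedFDeriv ℝ 2 (fun y => log (∫ ω, exp (ℓ ω y) ∂μ) - a * ‖y‖ ^ 2 + b) x ![v, v] =
      Var[fun ω => ℓ ω v; μ.tilted fun ω => ℓ ω x] - 2 * a * ‖v‖ ^ 2 := by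
  have hgrad (y : E) : HasFDerivAt (fun y => log (∫ ω, exp (ℓ ω y) ∂μ) - a * ‖y‖ ^ 2 + b)
      (∫ ω, ℓ ω ∂(μ.tilted fun ω => ℓ ω y) - (2 * a) • innerSL ℝ y) y := by
    refine (((hasFDerivAt_log_integral_exp hℓ hR y).sub
      ((hasStrictFDerivAt_norm_sq y).hasFDerivAt.const_mul a)).add_const b).congr_fderiv ?_
    rw [← ofNat_smul_eq_nsmul ℝ, smul_smul, mul_comm a]
  have hmean := (hasFDerivAt_integral_tilted hℓ hR (.of_bound hℓ R hR) x).differentiableAt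
  have hinner : HasFDerivAt (fun y : E => (2 * a) • innerSL ℝ y) ((2 * a) • innerSL ℝ) x :=
    ((innerSL ℝ).hasFDerivAt (x := x)).const_smul (2 * a)
  rw [iteratedFDeriv_two_apply, funext fun y => (hgrad y).fderiv,
    (hmean.hasFDerivAt.fun_sub hinner).fderiv]
  have hnorm : innerSL ℝ v v = ‖v‖ ^ 2 := real_inner_self_eq_norm_sq v
  simp [fderiv_integral_tilted_apply_self hℓ hR, hnorm]

theorem integral_exp_neg_norm_sub_sq_div (hw : w ≠ 0) (hu : AEStronglyMeasurable u μ) (x : E) :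
    ∫ ω, exp (-‖x - u ω‖ ^ 2 / (2 * w ^ 2)) ∂μ =
      (∫ ω, exp (-‖u ω‖ ^ 2 / (2 * w ^ 2)) ∂μ) * exp (-‖x‖ ^ 2 / (2 * w ^ 2)) *
        ∫ ω, exp (⟪u ω, x⟫ / w ^ 2) ∂(μ.tilted fun ω => -‖u ω‖ ^ 2 / (2 * w ^ 2)) := by
  have hpos := integral_exp_pos (integrable_exp_neg_norm_sq_div hu w)
  simp_rw [integral_exp_tilted, neg_norm_sub_sq_div hw x, exp_add _ (-‖x‖ ^ 2 / _),
    integral_mul_const, Pi.add_apply]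
  rw [mul_right_comm, mul_div_cancel₀ _ hpos.ne']

theorem tilted_tilted_inner_div (hw : w ≠ 0) (hu : AEStronglyMeasurable u μ) (x : E) :
    ((μ.tilted fun ω => -‖u ω‖ ^ 2 / (2 * w ^ 2)).tilted fun ω => ⟪u ω, x⟫ / w ^ 2) =
      μ.tilted fun ω => -‖x - u ω‖ ^ 2 / (2 * w ^ 2) := by
  rw [tilted_tilted (integrable_exp_neg_norm_sq_div hu w),
    ← tilted_add_const (integrable_exp_neg_norm_sub_sq_div hu x w) (‖x‖ ^ 2 / (2 * w ^ 2))]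
  congr 1
  ext ω
  rw [neg_norm_sub_sq_div hw x, Pi.add_apply]
  ring

theorem iteratedFDeriv_two_log_integral_exp_inner_sub_norm_sq (hu : AEStronglyMeasurable u μ)
    (hR : ∀ᵐ ω ∂μ, ‖u ω‖ ≤ R) (s a b : ℝ) (x v : E) :
    iteratedFDeriv ℝ 2 (fun y => log (∫ ω, exp (⟪u ω, y⟫ / s) ∂μ) - a * ‖y‖ ^ 2 + b) x ![v, v] =
      Var[fun ω => ⟪u ω, v⟫; μ.tilted fun ω => ⟪u ω, x⟫ / s] / s ^ 2 - 2 * a * ‖v‖ ^ 2 := by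
  let ℓ (ω : Ω) : E →L[ℝ] ℝ := s⁻¹ • innerSL ℝ (u ω)
  have hℓ : AEStronglyMeasurable ℓ μ :=
    ((innerSL ℝ).continuous.comp_aestronglyMeasurable hu).const_smul s⁻¹
  have hℓR : ∀ᵐ ω ∂μ, ‖ℓ ω‖ ≤ ‖s⁻¹‖ * R := by
    filter_upwards [hR] with ω hω
    rw [norm_smul, innerSL_apply_norm]
    gcongr
  have hℓ_apply (ω : Ω) (y : E) : ⟪u ω, y⟫ / s = ℓ ω y := by simp [ℓ, div_eq_inv_mul]
  have hvar (κ : Measure Ω) : Var[fun ω => ⟪u ω, v⟫; κ] / s ^ 2 = Var[fun ω => ℓ ω v; κ] := by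
    simp_rw [← hℓ_apply, div_eq_inv_mul, variance_const_mul, inv_pow]
  simp_rw [hvar, hℓ_apply]
  exact iteratedFDeriv_two_log_integral_exp_sub_norm_sq hℓ hℓR a b x v

-- The second-order Tweedie formula.
theorem iteratedFDeriv_two_log_gaussian_mixture (hw : w ≠ 0) (hu : AEStronglyMeasurable u μ)
    (hR : ∀ᵐ ω ∂μ, ‖u ω‖ ≤ R) {c : ℝ} (hc : c ≠ 0) (x v : E) :
    iteratedFDeriv ℝ 2 (fun y => log (c * ∫ ω, exp (-‖y - u ω‖ ^ 2 / (2 * w ^ 2)) ∂μ)) x ![v, v] =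
      Var[fun ω => ⟪u ω, v⟫; μ.tilted fun ω => -‖x - u ω‖ ^ 2 / (2 * w ^ 2)] / w ^ 4 -
        ‖v‖ ^ 2 / w ^ 2 := by
  have hexp := integrable_exp_neg_norm_sq_div hu w
  have hν := tilted_absolutelyContinuous μ fun ω => -‖u ω‖ ^ 2 / (2 * w ^ 2)
  have := isProbabilityMeasure_tilted hexp
  have hlog (y : E) : log (c * ∫ ω, exp (-‖y - u ω‖ ^ 2 / (2 * w ^ 2)) ∂μ) =
      log (∫ ω, exp (⟪u ω, y⟫ / w ^ 2) ∂(μ.tilted fun ω => -‖u ω‖ ^ 2 / (2 * w ^ 2))) -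
        (2 * w ^ 2)⁻¹ * ‖y‖ ^ 2 + log (c * ∫ ω, exp (-‖u ω‖ ^ 2 / (2 * w ^ 2)) ∂μ) := by
    have hA := (integral_exp_pos hexp).ne'
    have hexp_inner := integrable_exp_inner_div (hu.mono_ac hν) (hν.ae_le hR) y (w ^ 2)
    have hZ := (integral_exp_pos hexp_inner).ne'
    rw [integral_exp_neg_norm_sub_sq_div hw hu, ← mul_assoc, ← mul_assoc,
      log_mul (by positivity) hZ, log_mul (mul_ne_zero hc hA) (exp_pos _).ne', log_exp]
    ring
  rw [← tilted_tilted_inner_div hw hu x, funext hlog,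
    iteratedFDeriv_two_log_integral_exp_inner_sub_norm_sq (hu.mono_ac hν) (hν.ae_le hR)]
  field_simp

end GaussianMixture

section VonMises

/-- The unnormalised expectation of `f` under the von Mises distribution with mean direction `0`
and concentration `k`; for `f θ = cos (n * θ)` it is `2π Iₙ(k)`, with `Iₙ` the modified Bessel
function. -/
noncomputable def vonMisesIntegral (f : ℝ → ℝ) (k : ℝ) : ℝ :=
  ∫ θ in (0 : ℝ)..(2 * π), exp (k * cos θ) * f θ

variable {f g : ℝ → ℝ} {k : ℝ}

theorem vonMisesIntegral_const_mul (a : ℝ) (f : ℝ → ℝ) (k : ℝ) :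
    vonMisesIntegral (fun θ => a * f θ) k = a * vonMisesIntegral f k := by
  simp only [vonMisesIntegral, mul_left_comm _ a, intervalIntegral.integral_const_mul]

theorem vonMisesIntegral_add (hf : Continuous f) (hg : Continuous g) (k : ℝ) :
    vonMisesIntegral (fun θ => f θ + g θ) k = vonMisesIntegral f k + vonMisesIntegral g k := by
  simp only [vonMisesIntegral, mul_add]
  exact intervalIntegral.integral_add (Continuous.intervalIntegrable (by fun_prop) _ _)
    (Continuous.intervalIntegrable (by fun_prop) _ _)

theorem vonMisesIntegral_sub (hf : Continuous f) (hg : Continuous g) (k : ℝ) :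
    vonMisesIntegral (fun θ => f θ - g θ) k = vonMisesIntegral f k - vonMisesIntegral g k := by
  simp only [vonMisesIntegral, mul_sub]
  exact intervalIntegral.integral_sub (Continuous.intervalIntegrable (by fun_prop) _ _)
    (Continuous.intervalIntegrable (by fun_prop) _ _)

theorem vonMisesIntegral_nonneg (hf : ∀ θ, 0 ≤ f θ) (k : ℝ) : 0 ≤ vonMisesIntegral f k :=
  intervalIntegral.integral_nonneg two_pi_pos.le fun θ _ => mul_nonneg (exp_pos _).le (hf θ)

theorem vonMisesIntegral_one_pos (k : ℝ) : 0 < vonMisesIntegral (fun _ => 1) k :=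
  intervalIntegral.intervalIntegral_pos_of_pos
    (Continuous.intervalIntegrable (by fun_prop) _ _) (fun θ => by positivity) two_pi_pos

theorem vonMisesIntegral_eq_zero_of_odd (hf : f.Odd) (hper : f.Periodic (2 * π)) (k : ℝ) :
    vonMisesIntegral f k = 0 := by
  have hreflect (θ : ℝ) : exp (k * cos (2 * π - θ)) * f (2 * π - θ) = -(exp (k * cos θ) * f θ) := by
    rw [cos_two_pi_sub, hper.sub_eq', hf, mul_neg]
  have h := intervalIntegral.integral_comp_sub_left (fun θ => exp (k * cos θ) * f θ)
    (a := 0) (b := 2 * π) (2 * π)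
  simp only [hreflect, intervalIntegral.integral_neg, sub_self, sub_zero] at h
  exact self_eq_neg.1 h.symm

theorem hasDerivAt_vonMisesIntegral (hf : Continuous f) (k : ℝ) :
    HasDerivAt (vonMisesIntegral f) (vonMisesIntegral (fun θ => cos θ * f θ) k) k := by
  have h := hasDerivAt_integral_exp_mul (μ := volume.restrict (Set.Ioc 0 (2 * π)))
    continuous_cos.aestronglyMeasurable (.of_forall abs_cos_le_one)
    (hf.integrableOn_Ioc (a := 0) (b := 2 * π)) k
  simp only [← intervalIntegral.integral_of_le two_pi_pos.le] at h
  exact h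

theorem vonMisesIntegral_eq_mul_of_hasDerivAt {F : ℝ → ℝ} (hF : ∀ θ, HasDerivAt F (f θ) θ)
    (hf : Continuous f) (hper : F (2 * π) = F 0) (k : ℝ) :
    vonMisesIntegral f k = k * vonMisesIntegral (fun θ => sin θ * F θ) k := by
  have hexp (θ : ℝ) : HasDerivAt (fun θ => exp (k * cos θ)) (exp (k * cos θ) * (k * -sin θ)) θ :=
    ((hasDerivAt_cos θ).const_mul k).exp
  have h := intervalIntegral.integral_mul_deriv_eq_deriv_mul (a := 0) (b := 2 * π)
    (fun θ _ => hexp θ) (fun θ _ => hF θ) (Continuous.intervalIntegrable (by fun_prop) _ _)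
    (hf.intervalIntegrable _ _)
  simp only [cos_two_pi, cos_zero, hper, sub_self, zero_sub] at h
  rw [vonMisesIntegral, h, ← vonMisesIntegral_const_mul, ← intervalIntegral.integral_neg]
  exact intervalIntegral.integral_congr fun θ _ => by ring

theorem vonMisesIntegral_cos (k : ℝ) :
    vonMisesIntegral cos k = k * vonMisesIntegral (fun θ => sin θ ^ 2) k := by
  simpa [pow_two] using
    vonMisesIntegral_eq_mul_of_hasDerivAt hasDerivAt_sin continuous_cos (by simp) k

theorem vonMisesIntegral_cos_le_one (k : ℝ) :
    vonMisesIntegral cos k ≤ vonMisesIntegral (fun _ => 1) k := by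
  rw [← sub_nonneg, ← vonMisesIntegral_sub continuous_const continuous_cos]
  exact vonMisesIntegral_nonneg (fun θ => sub_nonneg.2 (cos_le_one θ)) k

theorem vonMisesIntegral_cos_mul_sin_sq_nonneg (hk : 0 ≤ k) :
    0 ≤ vonMisesIntegral (fun θ => cos θ * sin θ ^ 2) k := by
  have hderiv (θ : ℝ) : HasDerivAt (fun θ => sin θ ^ 3 / 3) (cos θ * sin θ ^ 2) θ :=
    (((hasDerivAt_sin θ).pow 3).div_const 3).congr_deriv (by push_cast; ring)
  rw [vonMisesIntegral_eq_mul_of_hasDerivAt hderiv (by fun_prop) (by simp)]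
  refine mul_nonneg hk (vonMisesIntegral_nonneg (fun θ => ?_) k)
  rw [show sin θ * (sin θ ^ 3 / 3) = sin θ ^ 4 / 3 by ring]
  positivity

theorem vonMisesIntegral_cos_two_mul_nonneg (hk : 0 ≤ k) :
    0 ≤ vonMisesIntegral (fun θ => cos (2 * θ)) k := by
  have hderiv (θ : ℝ) : HasDerivAt (fun θ => cos θ * sin θ) (cos (2 * θ)) θ :=
    ((hasDerivAt_cos θ).mul (hasDerivAt_sin θ)).congr_deriv (by rw [cos_two_mul']; ring)
  rw [vonMisesIntegral_eq_mul_of_hasDerivAt hderiv (by fun_prop) (by simp)]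
  simp_rw [mul_left_comm (sin _), ← pow_two]
  exact mul_nonneg hk (vonMisesIntegral_cos_mul_sin_sq_nonneg hk)

theorem vonMisesIntegral_sin_sq (k : ℝ) :
    vonMisesIntegral (fun θ => sin θ ^ 2) k =
      (vonMisesIntegral (fun _ => 1) k - vonMisesIntegral (fun θ => cos (2 * θ)) k) / 2 := by
  rw [← vonMisesIntegral_sub (by fun_prop) (by fun_prop), div_eq_inv_mul,
    ← vonMisesIntegral_const_mul]
  congr! 2 with θ
  rw [cos_two_mul, cos_sq']
  ring

theorem vonMisesIntegral_cos_sq (k : ℝ) :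
    vonMisesIntegral (fun θ => cos θ ^ 2) k =
      (vonMisesIntegral (fun _ => 1) k + vonMisesIntegral (fun θ => cos (2 * θ)) k) / 2 := by
  rw [← vonMisesIntegral_add (by fun_prop) (by fun_prop), div_eq_inv_mul,
    ← vonMisesIntegral_const_mul]
  congr! 2 with θ
  rw [cos_two_mul]
  ring

theorem vonMisesIntegral_turan (hk : 0 ≤ k) :
    vonMisesIntegral (fun _ => 1) k * vonMisesIntegral (fun θ => cos (2 * θ)) k ≤
      vonMisesIntegral cos k ^ 2 := by
  let T (k : ℝ) : ℝ := vonMisesIntegral cos k ^ 2 -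
    vonMisesIntegral (fun _ => 1) k * vonMisesIntegral (fun θ => cos (2 * θ)) k
  have hderiv (k : ℝ) : HasDerivAt T (2 * vonMisesIntegral (fun _ => 1) k *
      vonMisesIntegral (fun θ => cos θ * sin θ ^ 2) k) k := by
    have hcos := hasDerivAt_vonMisesIntegral continuous_cos k
    have hone := hasDerivAt_vonMisesIntegral (f := fun _ => 1) continuous_const k
    have hcos_two := hasDerivAt_vonMisesIntegral (f := fun θ => cos (2 * θ)) (by fun_prop) k
    have hsplit : vonMisesIntegral (fun θ => cos θ * cos (2 * θ)) k =
        vonMisesIntegral cos k - 2 * vonMisesIntegral (fun θ => cos θ * sin θ ^ 2) k := by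
      rw [← vonMisesIntegral_const_mul, ← vonMisesIntegral_sub (by fun_prop) (by fun_prop)]
      congr! 2 with θ
      rw [cos_two_mul, cos_sq']
      ring
    simp only [← pow_two, vonMisesIntegral_cos_sq, mul_one, hsplit] at hcos hone hcos_two
    exact ((hcos.pow 2).sub (hone.mul hcos_two)).congr_deriv (by push_cast; ring)
  have hmono : MonotoneOn T (Set.Ici 0) := by
    refine monotoneOn_of_hasDerivWithinAt_nonneg (convex_Ici 0)
      (fun t _ => (hderiv t).continuousAt.continuousWithinAt)
      (fun t _ => (hderiv t).hasDerivWithinAt) fun t ht => ?_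
    rw [interior_Ici] at ht
    have := (vonMisesIntegral_one_pos t).le
    have := vonMisesIntegral_cos_mul_sin_sq_nonneg (Set.mem_Ioi.1 ht).le
    positivity
  have hzero : T 0 = 0 := by
    simp [T, vonMisesIntegral, sin_two_mul]
  exact sub_nonneg.1 (hzero ▸ hmono Set.self_mem_Ici hk hk)

/-- The von Mises distribution with mean direction `φ` and concentration `k`, as a measure on `ℝ`
concentrated on the period `(0, 2π]`. -/
noncomputable def vonMises (φ k : ℝ) : Measure ℝ :=
  (volume.restrict (Set.Ioc 0 (2 * π))).tilted fun θ => k * cos (θ - φ)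

instance neZero_volume_restrict_Ioc_two_pi :
    NeZero ((volume : Measure ℝ).restrict (Set.Ioc 0 (2 * π))) :=
  ⟨by simp [Measure.restrict_eq_zero, pi_pos]⟩

instance isProbabilityMeasure_vonMises (φ k : ℝ) : IsProbabilityMeasure (vonMises φ k) :=
  isProbabilityMeasure_tilted (Continuous.integrableOn_Ioc (by fun_prop))

theorem integral_vonMises (hf : f.Periodic (2 * π)) (φ k : ℝ) :
    ∫ θ, f θ ∂(vonMises φ k) =
      vonMisesIntegral (fun θ => f (θ + φ)) k / vonMisesIntegral (fun _ => 1) k := by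
  have hshift {g : ℝ → ℝ} (hg : g.Periodic (2 * π)) :
      ∫ θ in Set.Ioc 0 (2 * π), exp (k * cos (θ - φ)) * g θ =
        vonMisesIntegral (fun θ => g (θ + φ)) k := by
    have hper : Function.Periodic (fun θ => exp (k * cos (θ - φ)) * g θ) (2 * π) := fun θ => by
      simp only [hg θ, add_sub_right_comm, cos_add_two_pi]
    rw [← intervalIntegral.integral_of_le two_pi_pos.le]
    calc _ = ∫ θ in φ..φ + 2 * π, exp (k * cos (θ - φ)) * g θ := by
          simpa using hper.intervalIntegral_add_eq 0 φ
      _ = vonMisesIntegral (fun θ => g (θ + φ)) k := by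
          simpa [vonMisesIntegral, add_comm φ] using (intervalIntegral.integral_comp_add_right
            (a := 0) (b := 2 * π) (fun θ => exp (k * cos (θ - φ)) * g θ) φ).symm
  have hone := hshift (g := fun _ => 1) fun _ => rfl
  rw [vonMises, integral_tilted_eq_inv_smul, ← hone, ← hshift hf]
  simp [div_eq_inv_mul]

theorem integral_cos_add_sin_vonMises (φ k a b : ℝ) :
    ∫ θ, a * cos (θ - φ) + b * sin (θ - φ) ∂(vonMises φ k) =
      a * vonMisesIntegral cos k / vonMisesIntegral (fun _ => 1) k := by
  have hsin : vonMisesIntegral sin k = 0 :=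
    vonMisesIntegral_eq_zero_of_odd sin_neg sin_periodic k
  rw [integral_vonMises fun θ => by simp only [add_sub_right_comm, cos_add_two_pi, sin_add_two_pi]]
  simp only [add_sub_cancel_right]
  rw [vonMisesIntegral_add (by fun_prop) (by fun_prop), vonMisesIntegral_const_mul,
    vonMisesIntegral_const_mul, hsin, mul_zero, add_zero]

theorem integral_cos_add_sin_sq_vonMises (φ k a b : ℝ) :
    ∫ θ, (a * cos (θ - φ) + b * sin (θ - φ)) ^ 2 ∂(vonMises φ k) =
      (a ^ 2 * vonMisesIntegral (fun θ => cos θ ^ 2) k +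
        b ^ 2 * vonMisesIntegral (fun θ => sin θ ^ 2) k) / vonMisesIntegral (fun _ => 1) k := by
  have hodd : vonMisesIntegral (fun θ => cos θ * sin θ) k = 0 :=
    vonMisesIntegral_eq_zero_of_odd (fun θ => by rw [cos_neg, sin_neg, mul_neg])
      (fun θ => by simp only [cos_add_two_pi, sin_add_two_pi]) k
  have hexpand (θ : ℝ) : (a * cos θ + b * sin θ) ^ 2 =
      a ^ 2 * cos θ ^ 2 + b ^ 2 * sin θ ^ 2 + 2 * a * b * (cos θ * sin θ) := by ring
  rw [integral_vonMises fun θ => by simp only [add_sub_right_comm, cos_add_two_pi, sin_add_two_pi]]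
  simp only [add_sub_cancel_right, hexpand]
  rw [vonMisesIntegral_add (by fun_prop) (by fun_prop),
    vonMisesIntegral_add (by fun_prop) (by fun_prop)]
  simp only [vonMisesIntegral_const_mul, hodd, mul_zero, add_zero]

theorem variance_vonMises_le (hk : 0 ≤ k) (φ a b : ℝ) :
    Var[fun θ => a * cos (θ - φ) + b * sin (θ - φ); vonMises φ k] ≤
      (a ^ 2 + b ^ 2) *
        (vonMisesIntegral (fun θ => sin θ ^ 2) k / vonMisesIntegral (fun _ => 1) k) := by
  have hLp : MemLp (fun θ => a * cos (θ - φ) + b * sin (θ - φ)) 2 (vonMises φ k) := by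
    refine .of_bound (by fun_prop) (|a| + |b|) (.of_forall fun θ => ?_)
    refine (norm_add_le _ _).trans ?_
    rw [norm_mul, norm_mul]
    exact add_le_add (mul_le_of_le_one_right (norm_nonneg a) (abs_cos_le_one _))
      (mul_le_of_le_one_right (norm_nonneg b) (abs_sin_le_one _))
  have hZ := vonMisesIntegral_one_pos k
  have hturan : vonMisesIntegral (fun θ => cos θ ^ 2) k * vonMisesIntegral (fun _ => 1) k -
      vonMisesIntegral cos k ^ 2 ≤
        vonMisesIntegral (fun θ => sin θ ^ 2) k * vonMisesIntegral (fun _ => 1) k := by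
    rw [vonMisesIntegral_cos_sq, vonMisesIntegral_sin_sq]
    linarith [vonMisesIntegral_turan hk]
  rw [variance_eq_sub hLp]
  simp only [Pi.pow_apply, integral_cos_add_sin_sq_vonMises, integral_cos_add_sin_vonMises]
  field_simp
  linarith [mul_le_mul_of_nonneg_left hturan (sq_nonneg a)]

theorem variance_vonMises_le_half (hk : 0 ≤ k) (φ a b : ℝ) :
    Var[fun θ => a * cos (θ - φ) + b * sin (θ - φ); vonMises φ k] ≤ (a ^ 2 + b ^ 2) / 2 := by
  have hhalf :
      vonMisesIntegral (fun θ => sin θ ^ 2) k / vonMisesIntegral (fun _ => 1) k ≤ 1 / 2 := by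
    rw [div_le_iff₀ (vonMisesIntegral_one_pos k), vonMisesIntegral_sin_sq]
    linarith [vonMisesIntegral_cos_two_mul_nonneg hk]
  rw [div_eq_mul_one_div]
  exact (variance_vonMises_le hk φ a b).trans (mul_le_mul_of_nonneg_left hhalf (by positivity))

theorem variance_vonMises_le_div (hk : 0 < k) (φ a b : ℝ) :
    Var[fun θ => a * cos (θ - φ) + b * sin (θ - φ); vonMises φ k] ≤ (a ^ 2 + b ^ 2) / k := by
  have hdiv :
      vonMisesIntegral (fun θ => sin θ ^ 2) k / vonMisesIntegral (fun _ => 1) k ≤ 1 / k := by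
    rw [div_le_div_iff₀ (vonMisesIntegral_one_pos k) hk, mul_comm, ← vonMisesIntegral_cos, one_mul]
    exact vonMisesIntegral_cos_le_one k
  rw [div_eq_mul_one_div]
  exact (variance_vonMises_le hk.le φ a b).trans (mul_le_mul_of_nonneg_left hdiv (by positivity))

end VonMises

section Circle

/-- The point of the unit circle at angle `θ`, in the coordinates of `EuclideanSpace ℝ (Fin 2)`. -/
noncomputable def circlePoint (θ : ℝ) : EuclideanSpace ℝ (Fin 2) :=
  (EuclideanSpace.equiv (Fin 2) ℝ).symm ![cos θ, sin θ]

theorem inner_circlePoint (θ : ℝ) (v : EuclideanSpace ℝ (Fin 2)) :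
    ⟪circlePoint θ, v⟫ = v 0 * cos θ + v 1 * sin θ := by
  simp [circlePoint, PiLp.inner_apply, Fin.sum_univ_two]

theorem norm_circlePoint (θ : ℝ) : ‖circlePoint θ‖ = 1 := by
  simp [circlePoint, EuclideanSpace.norm_eq, Fin.sum_univ_two]

theorem continuous_circlePoint : Continuous circlePoint := by
  refine (EuclideanSpace.equiv (Fin 2) ℝ).symm.continuous.comp (continuous_pi fun i => ?_)
  fin_cases i
  exacts [continuous_cos, continuous_sin]

theorem exists_eq_norm_smul_circlePoint (x : EuclideanSpace ℝ (Fin 2)) :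
    ∃ φ, x = ‖x‖ • circlePoint φ := by
  have hnorm : ‖x‖ = ‖(⟨x 0, x 1⟩ : ℂ)‖ := by
    simp [EuclideanSpace.norm_eq, Fin.sum_univ_two, Complex.norm_eq_sqrt_sq_add_sq]
  refine ⟨Complex.arg ⟨x 0, x 1⟩, ?_⟩
  ext i
  fin_cases i
  · simp [circlePoint, hnorm, Complex.norm_mul_cos_arg]
  · simp [circlePoint, hnorm, Complex.norm_mul_sin_arg]

theorem inner_circlePoint_eq_cos_add_sin (θ φ : ℝ) (v : EuclideanSpace ℝ (Fin 2)) :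
    ⟪circlePoint θ, v⟫ = ⟪circlePoint φ, v⟫ * cos (θ - φ) +
      ⟪circlePoint (φ + π / 2), v⟫ * sin (θ - φ) := by
  simp only [inner_circlePoint, cos_sub, sin_sub, cos_add_pi_div_two, sin_add_pi_div_two]
  linear_combination (-(v 0 * cos θ + v 1 * sin θ)) * sin_sq_add_cos_sq φ

theorem inner_circlePoint_sq_add_sq (φ : ℝ) (v : EuclideanSpace ℝ (Fin 2)) :
    ⟪circlePoint φ, v⟫ ^ 2 + ⟪circlePoint (φ + π / 2), v⟫ ^ 2 = ‖v‖ ^ 2 := by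
  simp only [inner_circlePoint, cos_add_pi_div_two, sin_add_pi_div_two,
    EuclideanSpace.norm_sq_eq, Fin.sum_univ_two, norm_eq_abs, sq_abs]
  linear_combination (v 0 ^ 2 + v 1 ^ 2) * sin_sq_add_cos_sq φ

theorem inner_circlePoint_circlePoint (θ φ : ℝ) :
    ⟪circlePoint θ, circlePoint φ⟫ = cos (θ - φ) := by
  rw [inner_circlePoint, cos_sub]
  simp [circlePoint, mul_comm]

theorem variance_inner_circlePoint_le_half {k : ℝ} (hk : 0 ≤ k) (φ : ℝ)
    (v : EuclideanSpace ℝ (Fin 2)) :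
    Var[fun θ => ⟪circlePoint θ, v⟫; vonMises φ k] ≤ ‖v‖ ^ 2 / 2 := by
  rw [funext fun θ => inner_circlePoint_eq_cos_add_sin θ φ v, ← inner_circlePoint_sq_add_sq φ v]
  exact variance_vonMises_le_half hk φ _ _

theorem variance_inner_circlePoint_le_div {k : ℝ} (hk : 0 < k) (φ : ℝ)
    (v : EuclideanSpace ℝ (Fin 2)) :
    Var[fun θ => ⟪circlePoint θ, v⟫; vonMises φ k] ≤ ‖v‖ ^ 2 / k := by
  rw [funext fun θ => inner_circlePoint_eq_cos_add_sin θ φ v, ← inner_circlePoint_sq_add_sq φ v]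
  exact variance_vonMises_le_div hk φ _ _

end Circle

section Ring

variable {w : ℝ}

theorem tilted_circlePoint_eq_vonMises (hw : w ≠ 0) (r φ : ℝ) :
    ((volume.restrict (Set.Ioc 0 (2 * π))).tilted
      fun θ => -‖r • circlePoint φ - circlePoint θ‖ ^ 2 / (2 * w ^ 2)) =
        vonMises φ (r / w ^ 2) := by
  have hexponent (θ : ℝ) : -‖r • circlePoint φ - circlePoint θ‖ ^ 2 / (2 * w ^ 2) =
      r / w ^ 2 * cos (θ - φ) + (-1 / (2 * w ^ 2) + -‖r • circlePoint φ‖ ^ 2 / (2 * w ^ 2)) := by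
    rw [neg_norm_sub_sq_div hw, norm_circlePoint, inner_smul_right, inner_circlePoint_circlePoint]
    ring
  simp_rw [hexponent]
  exact tilted_add_const (Continuous.integrableOn_Ioc (by fun_prop)) _

theorem iteratedFDeriv_two_log_circle_mixture {c : ℝ} (hw : w ≠ 0) (hc : c ≠ 0)
    (r φ : ℝ) (v : EuclideanSpace ℝ (Fin 2)) :
    iteratedFDeriv ℝ 2 (fun y => log (c * ∫ θ in (0 : ℝ)..(2 * π),
        exp (-‖y - circlePoint θ‖ ^ 2 / (2 * w ^ 2)))) (r • circlePoint φ) ![v, v] =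
      Var[fun θ => ⟪circlePoint θ, v⟫; vonMises φ (r / w ^ 2)] / w ^ 4 - ‖v‖ ^ 2 / w ^ 2 := by
  simp_rw [intervalIntegral.integral_of_le two_pi_pos.le, ← tilted_circlePoint_eq_vonMises hw]
  exact iteratedFDeriv_two_log_gaussian_mixture hw continuous_circlePoint.aestronglyMeasurable
    (.of_forall fun θ => (norm_circlePoint θ).le) hc _ v

theorem ring_hessian_upper_bounds_general (w : ℝ) (hw : w ≠ 0)
    (p : EuclideanSpace ℝ (Fin 2) → ℝ)
    (hp : ∀ x, p x = (1 / (2 * π)) * ∫ θ in (0 : ℝ)..(2 * π),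
      (1 / (2 * π * w ^ 2)) *
        exp (-‖x - (EuclideanSpace.equiv (Fin 2) ℝ).symm ![cos θ, sin θ]‖ ^ 2 / (2 * w ^ 2)))
    (x v : EuclideanSpace ℝ (Fin 2)) :
    iteratedFDeriv ℝ 2 (fun y => log (p y)) x ![v, v] ≤
        (1 / (2 * w ^ 4) - 1 / w ^ 2) * ‖v‖ ^ 2 ∧
      (0 < ‖x‖ → iteratedFDeriv ℝ 2 (fun y => log (p y)) x ![v, v] ≤
        (1 / (w ^ 2 * ‖x‖) - 1 / w ^ 2) * ‖v‖ ^ 2) ∧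
      (1 ≤ ‖x‖ → iteratedFDeriv ℝ 2 (fun y => log (p y)) x ![v, v] ≤ 0) := by
  obtain ⟨φ, hφ⟩ := exists_eq_norm_smul_circlePoint x
  have hhess : iteratedFDeriv ℝ 2 (fun y => log (p y)) x ![v, v] =
      Var[fun θ => ⟪circlePoint θ, v⟫; vonMises φ (‖x‖ / w ^ 2)] / w ^ 4 - ‖v‖ ^ 2 / w ^ 2 := by
    simp_rw [hp, intervalIntegral.integral_const_mul, ← mul_assoc]
    conv_lhs => rw [hφ]
    exact iteratedFDeriv_two_log_circle_mixture hw (by positivity) ‖x‖ φ v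
  have hradial (hx : 0 < ‖x‖) : iteratedFDeriv ℝ 2 (fun y => log (p y)) x ![v, v] ≤
      (1 / (w ^ 2 * ‖x‖) - 1 / w ^ 2) * ‖v‖ ^ 2 := by
    rw [hhess]
    calc _ ≤ ‖v‖ ^ 2 / (‖x‖ / w ^ 2) / w ^ 4 - ‖v‖ ^ 2 / w ^ 2 := by
          gcongr
          exact variance_inner_circlePoint_le_div (by positivity) φ v
      _ = (1 / (w ^ 2 * ‖x‖) - 1 / w ^ 2) * ‖v‖ ^ 2 := by field_simp
  refine ⟨?_, hradial, fun hx => (hradial (by positivity)).trans ?_⟩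
  · rw [hhess]
    calc _ ≤ ‖v‖ ^ 2 / 2 / w ^ 4 - ‖v‖ ^ 2 / w ^ 2 := by
          gcongr
          exact variance_inner_circlePoint_le_half (by positivity) φ v
      _ = (1 / (2 * w ^ 4) - 1 / w ^ 2) * ‖v‖ ^ 2 := by field_simp
  · refine mul_nonpos_of_nonpos_of_nonneg (sub_nonpos.2 ?_) (by positivity)
    gcongr
    exact le_mul_of_one_le_right (by positivity) hx

end Ring

end

/-- Let `p` be the density of the uniform distribution on the unit
circle convolved with `N(0, w² I₂)`, for `w ∈ (0, 0.01)`.  Then for `x ≠ 0` with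
`r = ‖x‖`, the Hessian of `log p` satisfies `∇² log p(x) ⪯ (1/(2w⁴) − 1/w²) I₂` when
`0 < r ≤ w²`, `∇² log p(x) ⪯ (1/(w²r) − 1/w²) I₂` when `w² < r ≤ 1`, and
`∇² log p(x) ⪯ 0` when `r > 1`. -/
theorem ring_hessian_upper_bounds (w : ℝ) (hw : w ∈ Set.Ioo (0 : ℝ) 0.01)
    (p : EuclideanSpace ℝ (Fin 2) → ℝ)
    (hp : ∀ x, p x = (1 / (2 * π)) * ∫ θ in (0 : ℝ)..(2 * π),
      (1 / (2 * π * w ^ 2)) *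
        Real.exp (-‖x - (EuclideanSpace.equiv (Fin 2) ℝ).symm ![Real.cos θ, Real.sin θ]‖ ^ 2 /
          (2 * w ^ 2)))
    (x : EuclideanSpace ℝ (Fin 2)) (hx : 0 < ‖x‖) :
    (‖x‖ ≤ w ^ 2 → ∀ v : EuclideanSpace ℝ (Fin 2),
        (iteratedFDeriv ℝ 2 (fun y => Real.log (p y)) x) ![v, v] ≤
          (1 / (2 * w ^ 4) - 1 / w ^ 2) * ‖v‖ ^ 2) ∧
    (w ^ 2 < ‖x‖ → ‖x‖ ≤ 1 → ∀ v : EuclideanSpace ℝ (Fin 2),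
        (iteratedFDeriv ℝ 2 (fun y => Real.log (p y)) x) ![v, v] ≤
          (1 / (w ^ 2 * ‖x‖) - 1 / w ^ 2) * ‖v‖ ^ 2) ∧
    (1 < ‖x‖ → ∀ v : EuclideanSpace ℝ (Fin 2),
        (iteratedFDeriv ℝ 2 (fun y => Real.log (p y)) x) ![v, v] ≤ 0) := by
  have hbound := ring_hessian_upper_bounds_general w hw.1.ne' p hp x
  exact ⟨fun _ v => (hbound v).1, fun _ _ v => (hbound v).2.1 hx,
    fun hx v => (hbound v).2.2 hx.le⟩
end
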